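/- arXiv:2006.05511 — 2 statements merged into one kernel-verified Lean document; each statement's English description precedes it below -/
import Mathlib

section
/- Let n ≥ 3 and let G be any graph such that I(G,x) = I(U_n,x) as polynomials. Then G is isomorphic to U_n, or else n = 4 and G is isomorphic to the cycle C_4. -/
/-!
The coefficients `i_1` and `i_{n-2}` show that a graph `G` with the independence polynomial of
`U_n` has `n` vertices and, like `U_n`, a vertex cover `{a, b}`. Let `A` and `B` count the
non-neighbours of `a` and of `b` outside `{a, b}`, and `Z` the common ones. Deleting `a` and `b`
gives
`I(G, x) = (1 + x)^{n-2} + x (1 + x)^A + x (1 + x)^B + [a ≁ b] x² (1 + x)^Z`,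
while for `U_n` the parameters are `{A, B} = {0, n - 3}` with `a ∼ b`.

If `a ∼ b`, the value at `x = 1` is `2^A + 2^B = 2^{n-3} + 1`, so `{A, B} = {0, n - 3}` and
`G ≅ U_n`. If `a ≁ b`, the value at `x = -1`, where `(1 + x)^k` is `0` unless `k = 0`, forces
`A = B = Z = 0`; then the value at `x = 1` gives `n = 4`, and `G` is the four-cycle `K_{2,2}`.
-/

open Polynomial SimpleGraph

/-- A finset of vertices is independent: pairwise nonadjacent. -/
def IsIndepFinset {V : Type*} (G : SimpleGraph V) (s : Finset V) : Prop :=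
  ∀ u ∈ s, ∀ v ∈ s, ¬ G.Adj u v

open Classical in
/-- The independence polynomial of a finite graph, with real coefficients. -/
noncomputable def indepPoly {V : Type*} [Fintype V] (G : SimpleGraph V) : Polynomial ℝ :=
  ∑ s : Finset V, if IsIndepFinset G s then (X : Polynomial ℝ) ^ s.card else 0

/-- `xi G` : the largest real root of the independence polynomial of `G`. -/
noncomputable def xi {V : Type*} [Fintype V] (G : SimpleGraph V) : ℝ :=
  sSup {x : ℝ | (indepPoly G).eval x = 0}

/-- `Pre H G` (`H ⪯ G`) : `I(H,x) ≥ I(G,x)` for all `x ∈ [ξ(G), 0]`. -/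
def Pre {V W : Type*} [Fintype V] [Fintype W] (H : SimpleGraph W) (G : SimpleGraph V) : Prop :=
  ∀ x ∈ Set.Icc (xi G) 0, (indepPoly G).eval x ≤ (indepPoly H).eval x

/-- `SPre H G` (`H ≺ G`). -/
def SPre {V W : Type*} [Fintype V] [Fintype W] (H : SimpleGraph W) (G : SimpleGraph V) : Prop :=
  Pre H G ∧ indepPoly H ≠ indepPoly G

open Classical in
/-- A graph is well-covered if all maximal independent sets have the same size. -/
def WellCovered {V : Type*} (G : SimpleGraph V) : Prop :=
  ∀ s t : Finset V,
    IsIndepFinset G s → (∀ v ∉ s, ¬ IsIndepFinset G (insert v s)) →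
    IsIndepFinset G t → (∀ v ∉ t, ¬ IsIndepFinset G (insert v t)) →
    s.card = t.card

/-- A connected unicyclic graph: connected with as many edges as vertices. -/
def Unicyclic {V : Type*} [Fintype V] (G : SimpleGraph V) : Prop :=
  G.Connected ∧ G.edgeSet.ncard = Fintype.card V

/-- The graph star (corona with `K₁`) of `G`: each vertex `inl v` gets a pendant
vertex `inr v`. -/
def corona {V : Type*} (G : SimpleGraph V) : SimpleGraph (V ⊕ V) :=
  SimpleGraph.fromRel (fun a b =>
    match a, b with
    | Sum.inl u, Sum.inl v => G.Adj u v
    | Sum.inl u, Sum.inr v => u = v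
    | _, _ => False)

/-- `Ugraph n` (`U_n`, `n ≥ 3`): a triangle `0,1,2` with `n - 3` pendant vertices attached
to vertex `0`. -/
def Ugraph (n : ℕ) : SimpleGraph (Fin n) :=
  SimpleGraph.fromRel (fun i j => i.val = 0 ∨ (i.val = 1 ∧ j.val = 2))

/-- `Dgraph n` (`D_n`, `n ≥ 4`): a path `0,1,...,n-1` plus the chord `{0,2}`, i.e. a
triangle with a path on `n - 3` vertices attached. -/
def Dgraph (n : ℕ) : SimpleGraph (Fin n) :=
  SimpleGraph.fromRel (fun i j => j.val = i.val + 1 ∨ (i.val = 0 ∧ j.val = 2))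

/-- `starGraph n` (`S_n = K_{1,n-1}`): vertex `0` adjacent to all other vertices. -/
def starGraph (n : ℕ) : SimpleGraph (Fin n) :=
  SimpleGraph.fromRel (fun i _ => i.val = 0)

/-- `Mgraph n` (`M_n`, odd `n ≥ 5`): a triangle `0,1,2` with `(n-3)/2` paths of length two
attached at vertex `0`; the middle vertices are the odd indices `3,5,...,n-2` and the leaf
attached to middle vertex `i` is `i + 1`. -/
def Mgraph (n : ℕ) : SimpleGraph (Fin n) :=
  SimpleGraph.fromRel (fun i j =>
    (i.val = 0 ∧ (j.val ≤ 2 ∨ j.val % 2 = 1)) ∨ (i.val = 1 ∧ j.val = 2) ∨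
    (i.val % 2 = 1 ∧ 3 ≤ i.val ∧ j.val = i.val + 1))

/-- `SPgraph g k ℓ` (`G(g,k,ℓ)`, for `g ∈ {3,5}` and `k + ℓ ≥ 1`): a cycle on the vertices
`0,...,g-1`, a copy of `P_k*` on the vertices `g,...,g+2k-1` (path vertices at even offsets,
each followed by its pendant vertex) joined to the cycle vertex `0` by an edge to the
path end `g`, and a copy of `P_ℓ*` on the vertices `g+2k,...,g+2k+2ℓ-1` joined to the cycle
vertex `2` by an edge to the path end `g+2k`. -/
def SPgraph (g k ℓ : ℕ) : SimpleGraph (Fin (g + 2*k + 2*ℓ)) :=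
  SimpleGraph.fromRel (fun i j =>
    (i.val < g ∧ j.val < g ∧ (j.val = i.val + 1 ∨ (i.val = 0 ∧ j.val = g - 1))) ∨
    (i.val = 0 ∧ 0 < k ∧ j.val = g) ∨
    (g ≤ i.val ∧ i.val < g + 2*k ∧ (i.val - g) % 2 = 0 ∧
      (j.val = i.val + 1 ∨ (j.val = i.val + 2 ∧ j.val < g + 2*k))) ∨
    (i.val = 2 ∧ 0 < ℓ ∧ j.val = g + 2*k) ∨
    (g + 2*k ≤ i.val ∧ (i.val - (g + 2*k)) % 2 = 0 ∧
      (j.val = i.val + 1 ∨ j.val = i.val + 2)))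

/-- `Gtree n` (`G_{2n}`, `n ≥ 5`): the tree on `2n` vertices with path `v_1 … v_n` at
indices `0,…,n-1`, `z_1` at index `n`, `y_1, y_2` at `n+1, n+2`, `x_1, x_2` at `n+3, n+4`
(with `v_3 z_1`, `v_3 y_1`, `y_1 y_2`, `v_5 x_1`, `x_1 x_2` edges), and pendant vertices
`w_j` at index `n + j - 1` attached to `v_j` for `6 ≤ j ≤ n`. -/
def Gtree (n : ℕ) : SimpleGraph (Fin (2*n)) :=
  SimpleGraph.fromRel (fun a b =>
    (a.val + 1 = b.val ∧ b.val < n) ∨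
    (a.val = 2 ∧ (b.val = n ∨ b.val = n + 1)) ∨
    (a.val = n + 1 ∧ b.val = n + 2) ∨
    (a.val = 4 ∧ b.val = n + 3) ∨
    (a.val = n + 3 ∧ b.val = n + 4) ∨
    (5 ≤ a.val ∧ a.val < n ∧ b.val = n + a.val))

section

open scoped Finset

section Coefficients

variable {V W : Type*}

lemma isIndepFinset_iff_isIndepSet (G : SimpleGraph V) (s : Finset V) :
    IsIndepFinset G s ↔ G.IsIndepSet s :=
  ⟨fun h u hu v hv _ => h u hu v hv, fun h _ hu _ hv huv => h hu hv huv.ne huv⟩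

variable [Fintype V] [Fintype W]

open Classical in
lemma coeff_indepPoly (G : SimpleGraph V) (k : ℕ) :
    (indepPoly G).coeff k = #(G.indepSetFinset k) := by
  simp only [indepPoly, isIndepFinset_iff_isIndepSet, indepSetFinset, isNIndepSet_iff,
    ← Finset.sum_filter, finsetSum_coeff, coeff_X_pow, eq_comm (a := k),
    Finset.filter_filter]
  simp

lemma exists_isNIndepSet_of_indepPoly_eq {G : SimpleGraph V} {H : SimpleGraph W}
    (h : indepPoly G = indepPoly H) {k : ℕ} {t : Finset W} (ht : H.IsNIndepSet k t) :
    ∃ s, G.IsNIndepSet k s := by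
  classical
  have hcard : #(G.indepSetFinset k) = #(H.indepSetFinset k) := by
    have hcoeff := congrArg (coeff · k) h
    simp only [coeff_indepPoly] at hcoeff
    exact_mod_cast hcoeff
  obtain ⟨s, hs⟩ : (G.indepSetFinset k).Nonempty := by
    rw [← Finset.card_pos, hcard, Finset.card_pos]
    exact ⟨t, mem_indepSetFinset_iff.2 ht⟩
  exact ⟨s, mem_indepSetFinset_iff.1 hs⟩

lemma coeff_one_indepPoly (G : SimpleGraph V) : (indepPoly G).coeff 1 = Fintype.card V := by
  classical
  have hsingletons : G.indepSetFinset 1 =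
      Finset.univ.map ⟨singleton, Finset.singleton_injective⟩ := by
    ext s
    simp [← isNClique_compl, isNClique_one, eq_comm]
  rw [coeff_indepPoly, hsingletons, Finset.card_map, Finset.card_univ]

lemma card_eq_of_indepPoly_eq {G : SimpleGraph V} {H : SimpleGraph W}
    (h : indepPoly G = indepPoly H) : Fintype.card V = Fintype.card W := by
  have hcoeff := congrArg (coeff · 1) h
  simp only [coeff_one_indepPoly] at hcoeff
  exact_mod_cast hcoeff

lemma exists_isVertexCover_card_eq_of_indepPoly_eq {G : SimpleGraph V} {H : SimpleGraph W}
    (h : indepPoly G = indepPoly H) {D : Finset W} (hD : H.IsVertexCover D) :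
    ∃ C : Finset V, G.IsVertexCover C ∧ #C = #D := by
  classical
  have hcompl : H.IsNIndepSet #Dᶜ Dᶜ := ⟨by simpa using hD, rfl⟩
  obtain ⟨s, hs⟩ := exists_isNIndepSet_of_indepPoly_eq h hcompl
  refine ⟨sᶜ, by simpa using hs.isIndepSet, ?_⟩
  have hVW := card_eq_of_indepPoly_eq h
  have hDW := D.card_le_univ
  rw [Finset.card_compl, hs.card_eq, Finset.card_compl]
  omega

end Coefficients

section Recurrence

variable {V : Type*} [DecidableEq V]

/-- The independence polynomial of the subgraph of `G` induced on `S`, encoded as a sum over the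
independent subsets of `S` in `G` so that vertex deletion stays within the type `V`. -/
noncomputable def indepPolyOn (G : SimpleGraph V) [DecidableRel G.Adj] (S : Finset V) : ℝ[X] :=
  ∑ s ∈ S.powerset.filter fun s : Finset V => G.IsIndepSet s, X ^ #s

lemma indepPolyOn_univ [Fintype V] (G : SimpleGraph V) [DecidableRel G.Adj] :
    indepPolyOn G Finset.univ = indepPoly G := by
  rw [indepPolyOn, indepPoly, Finset.powerset_univ, Finset.sum_filter]
  simp only [isIndepFinset_iff_isIndepSet]

variable {G : SimpleGraph V} {S : Finset V}

lemma isIndepSet_coe_insert_iff {v : V} {s : Finset V} (hv : v ∉ s) :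
    G.IsIndepSet (insert v s : Finset V) ↔ G.IsIndepSet s ∧ ∀ w ∈ s, ¬ G.Adj v w := by
  have : Std.Symm fun u w => ¬ G.Adj u w := ⟨fun _ _ h h' => h h'.symm⟩
  rw [isIndepSet_iff, isIndepSet_iff, Finset.coe_insert,
    Set.pairwise_insert_of_symm_of_notMem (Finset.mem_coe.not.2 hv)]
  rfl

variable [DecidableRel G.Adj]

lemma indepPolyOn_of_isIndepSet (hS : G.IsIndepSet S) : indepPolyOn G S = (1 + X) ^ #S := by
  have hsub : ∀ s ∈ S.powerset, G.IsIndepSet (s : Set V) := fun s hs =>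
    hS.mono (Finset.coe_subset.2 (Finset.mem_powerset.1 hs))
  rw [indepPolyOn, Finset.filter_true_of_mem hsub, ← Finset.prod_const, Finset.prod_one_add]
  simp only [Finset.prod_const]

lemma indepPolyOn_insert {v : V} (hv : v ∉ S) :
    indepPolyOn G (insert v S) =
      indepPolyOn G S + X * indepPolyOn G {w ∈ S | ¬ G.Adj v w} := by
  rw [indepPolyOn, Finset.sum_filter, Finset.sum_powerset_insert hv, ← Finset.sum_filter,
    ← Finset.sum_filter, indepPolyOn, indepPolyOn, Finset.mul_sum]
  congr 1
  have hfilter : S.powerset.filter (fun s : Finset V => G.IsIndepSet (insert v s : Finset V)) =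
      ({w ∈ S | ¬ G.Adj v w} : Finset V).powerset.filter fun s : Finset V => G.IsIndepSet s := by
    ext s
    simp only [Finset.mem_filter, Finset.mem_powerset, Finset.subset_iff]
    constructor
    · rintro ⟨hs, h⟩
      obtain ⟨hindep, hadj⟩ := (isIndepSet_coe_insert_iff (mt (@hs v) hv)).1 h
      exact ⟨fun w hw => ⟨hs hw, hadj w hw⟩, hindep⟩
    · rintro ⟨hs, h⟩
      exact ⟨fun w hw => (hs hw).1,
        (isIndepSet_coe_insert_iff fun hvs => hv (hs hvs).1).2 ⟨h, fun w hw => (hs hw).2⟩⟩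
  rw [hfilter]
  refine Finset.sum_congr rfl fun s hs => ?_
  have hvs : v ∉ s := by grind
  rw [Finset.card_insert_of_notMem hvs, pow_succ']

lemma indepPolyOn_insert_of_isIndepSet {v : V} (hv : v ∉ S) (hS : G.IsIndepSet S) :
    indepPolyOn G (insert v S) = (1 + X) ^ #S + X * (1 + X) ^ #{w ∈ S | ¬ G.Adj v w} := by
  have hfilter : G.IsIndepSet ({w ∈ S | ¬ G.Adj v w} : Finset V) :=
    hS.mono (Finset.coe_subset.2 (Finset.filter_subset _ _))
  rw [indepPolyOn_insert hv, indepPolyOn_of_isIndepSet hS, indepPolyOn_of_isIndepSet hfilter]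

end Recurrence

section PairCover

variable {V : Type*} [Fintype V] [DecidableEq V] {G : SimpleGraph V} [DecidableRel G.Adj] {a b : V}

lemma indepPoly_eq_of_isVertexCover_pair (hab : a ≠ b) (hG : G.IsVertexCover {a, b}) :
    indepPoly G = (1 + X) ^ (Fintype.card V - 2) + X * (1 + X) ^ #((Gᶜ.neighborFinset b).erase a)
      + X * indepPolyOn G (Gᶜ.neighborFinset a) := by
  have hS : G.IsIndepSet (({a, b} : Finset V)ᶜ : Finset V) := by
    rwa [Finset.coe_compl, Finset.coe_pair, isIndepSet_compl_iff_isVertexCover]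
  have huniv : (Finset.univ : Finset V) = insert a (insert b {a, b}ᶜ) := by
    grind [Finset.mem_compl]
  have hcard : #({a, b} : Finset V)ᶜ = Fintype.card V - 2 := by
    rw [Finset.card_compl, Finset.card_pair hab]
  have ha : {w ∈ insert b ({a, b} : Finset V)ᶜ | ¬ G.Adj a w} = Gᶜ.neighborFinset a := by
    grind [mem_neighborFinset, compl_adj, Finset.mem_compl]
  have hb : {w ∈ ({a, b} : Finset V)ᶜ | ¬ G.Adj b w} = (Gᶜ.neighborFinset b).erase a := by
    grind [mem_neighborFinset, compl_adj, Finset.mem_compl]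
  rw [← indepPolyOn_univ, huniv, indepPolyOn_insert (by grind [Finset.mem_compl]), ha,
    indepPolyOn_insert_of_isIndepSet (by grind [Finset.mem_compl]) hS, hcard, hb]

lemma isIndepSet_neighborFinset_compl_erase_of_isVertexCover_pair (hG : G.IsVertexCover {a, b}) :
    G.IsIndepSet ((Gᶜ.neighborFinset a).erase b) := by
  refine Set.Pairwise.mono (fun w hw => ?_) (isIndepSet_compl_iff_isVertexCover.2 hG)
  simp only [Finset.mem_coe, Finset.mem_erase, mem_neighborFinset] at hw
  simp [hw.1, hw.2.ne']

lemma indepPoly_eq_of_isVertexCover_pair_of_adj (hab : G.Adj a b) (hG : G.IsVertexCover {a, b}) :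
    indepPoly G = (1 + X) ^ (Fintype.card V - 2) + X * (1 + X) ^ Gᶜ.degree b
      + X * (1 + X) ^ Gᶜ.degree a := by
  have ha : (Gᶜ.neighborFinset a).erase b = Gᶜ.neighborFinset a :=
    Finset.erase_eq_of_notMem (by simp [hab])
  have hb : (Gᶜ.neighborFinset b).erase a = Gᶜ.neighborFinset b :=
    Finset.erase_eq_of_notMem (by simp [hab.symm])
  rw [indepPoly_eq_of_isVertexCover_pair hab.ne hG, ← ha,
    indepPolyOn_of_isIndepSet (isIndepSet_neighborFinset_compl_erase_of_isVertexCover_pair hG),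
    ha, hb, card_neighborFinset_eq_degree, card_neighborFinset_eq_degree]

lemma indepPoly_eq_of_isVertexCover_pair_of_not_adj (hne : a ≠ b) (hab : ¬ G.Adj a b)
    (hG : G.IsVertexCover {a, b}) :
    indepPoly G = (1 + X) ^ (Fintype.card V - 2)
      + X * (1 + X) ^ #((Gᶜ.neighborFinset b).erase a)
      + X * ((1 + X) ^ #((Gᶜ.neighborFinset a).erase b)
        + X * (1 + X) ^ #(Gᶜ.neighborFinset a ∩ Gᶜ.neighborFinset b)) := by
  have hinsert : insert b ((Gᶜ.neighborFinset a).erase b) = Gᶜ.neighborFinset a :=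
    Finset.insert_erase (by simp [hne, hab])
  have hinter : {w ∈ (Gᶜ.neighborFinset a).erase b | ¬ G.Adj b w} =
      Gᶜ.neighborFinset a ∩ Gᶜ.neighborFinset b := by
    grind [mem_neighborFinset, compl_adj]
  rw [indepPoly_eq_of_isVertexCover_pair hne hG, ← hinsert,
    indepPolyOn_insert_of_isIndepSet (Finset.notMem_erase b _)
      (isIndepSet_neighborFinset_compl_erase_of_isVertexCover_pair hG), hinter, hinsert]

end PairCover

section Arithmetic

lemma pow_add_pow_eq_pow_add_one {q A B m : ℕ} (hq : 1 < q) (h : q ^ A + q ^ B = q ^ m + 1) :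
    A = 0 ∧ B = m ∨ B = 0 ∧ A = m := by
  rcases eq_or_ne A 0 with rfl | hA
  · exact .inl ⟨rfl, Nat.pow_right_injective hq (by simpa [add_comm] using h)⟩
  rcases eq_or_ne B 0 with rfl | hB
  · exact .inr ⟨rfl, Nat.pow_right_injective hq (by simpa [add_comm] using h)⟩
  have hdvd : q ∣ q ^ m + 1 := h ▸ dvd_add (dvd_pow_self q hA) (dvd_pow_self q hB)
  have hm : m = 0 := by
    by_contra hm
    exact hq.ne' (Nat.dvd_one.1 ((Nat.dvd_add_right (dvd_pow_self q hm)).1 hdvd))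
  have hqA := Nat.one_lt_pow hA hq
  have hqB := Nat.one_lt_pow hB hq
  simp only [hm, pow_zero] at h
  omega

lemma eq_zero_and_eq_zero_and_eq_one_of_one_add_X_pow_eq {A B Z m : ℕ} (hZA : Z ≤ A) (hZB : Z ≤ B)
    (h : (1 + X : ℝ[X]) ^ A + (1 + X) ^ B + X * (1 + X) ^ Z = (1 + X) ^ m + 1) :
    A = 0 ∧ B = 0 ∧ m = 1 := by
  have h0 : (0 : ℝ) ^ A + 0 ^ B - 0 ^ Z = 0 ^ m + 1 := by
    simpa [sub_eq_add_neg] using congrArg (eval (-1)) h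
  have hA : (0 : ℝ) ^ A ≤ 0 ^ Z := pow_le_pow_of_le_one le_rfl zero_le_one hZA
  have hB : (0 : ℝ) ^ B ≤ 0 ^ Z := pow_le_pow_of_le_one le_rfl zero_le_one hZB
  have hm : (0 : ℝ) ≤ 0 ^ m := by positivity
  have hA0 : A = 0 := by
    by_contra hA0
    rw [zero_pow hA0] at h0
    linarith
  have hB0 : B = 0 := by
    by_contra hB0
    rw [zero_pow hB0] at h0
    linarith
  obtain rfl : Z = 0 := by omega
  have h1 : (2 : ℝ) ^ m = 2 ^ 1 := by
    have heval := congrArg (eval 1) h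
    simp only [hA0, hB0, pow_zero, eval_add, eval_mul, eval_pow, eval_one, eval_X] at heval
    rw [one_add_one_eq_two] at heval
    linarith
  exact ⟨hA0, hB0, pow_right_injective₀ two_pos (by norm_num) h1⟩

end Arithmetic

lemma exists_equiv_apply_eq_of_card_eq {ι α β : Type*} [Fintype α] [Fintype β]
    (h : Fintype.card α = Fintype.card β) {f : ι → α} {g : ι → β}
    (hf : f.Injective) (hg : g.Injective) : ∃ e : α ≃ β, ∀ i, e (f i) = g i := by
  obtain ⟨e₀⟩ := Fintype.card_eq.1 h
  have hext (i : ι) : f.extend g e₀ (f i) = g i := hf.extend_apply g e₀ i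
  have hinj : Set.InjOn (f.extend g e₀) (Set.range f) := by
    rintro _ ⟨i, rfl⟩ _ ⟨j, rfl⟩ hij
    rw [hext, hext] at hij
    rw [hg hij]
  obtain ⟨e, he⟩ := Set.MapsTo.exists_equiv_extend_of_card_eq (t := Finset.univ)
    (f := f.extend g e₀) h (by simp [Set.MapsTo]) hinj
  exact ⟨e.trans (Equiv.subtypeUnivEquiv Finset.mem_univ), fun i => (he _ ⟨i, rfl⟩).trans (hext i)⟩

section UGraph

variable {m : ℕ}

lemma ugraph_adj {n : ℕ} {i j : Fin n} : (Ugraph n).Adj i j ↔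
    i ≠ j ∧ ((i.val = 0 ∨ i.val = 1 ∧ j.val = 2) ∨ (j.val = 0 ∨ j.val = 1 ∧ i.val = 2)) :=
  fromRel_adj _ _ _

lemma isVertexCover_ugraph : (Ugraph (m + 3)).IsVertexCover {0, 1} := by
  intro i j hij
  rw [ugraph_adj] at hij
  simp only [Set.mem_insert_iff, Set.mem_singleton_iff, Fin.ext_iff, Fin.val_zero, Fin.val_one]
  tauto

lemma indepPoly_ugraph :
    indepPoly (Ugraph (m + 3)) = (1 + X) ^ (m + 1) + X * (1 + X) ^ m + X := by
  classical
  have hzero : (Ugraph (m + 3))ᶜ.neighborFinset 0 = ∅ := by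
    ext i
    simp [compl_adj, ugraph_adj]
  have hone : (Ugraph (m + 3))ᶜ.neighborFinset 1 = {0, 1, 2}ᶜ := by
    ext i
    simp only [mem_neighborFinset, compl_adj, ugraph_adj, Finset.mem_compl, Finset.mem_insert,
      Finset.mem_singleton, Fin.ext_iff, Fin.val_zero, Fin.val_one, Fin.val_two, ne_eq, true_and]
    omega
  have hthree : #({0, 1, 2} : Finset (Fin (m + 3))) = 3 :=
    Finset.card_eq_three.2 ⟨0, 1, 2, nofun, nofun, nofun, rfl⟩
  have hadj : (Ugraph (m + 3)).Adj 0 1 := by simp [ugraph_adj]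
  rw [indepPoly_eq_of_isVertexCover_pair_of_adj hadj isVertexCover_ugraph,
    ← card_neighborFinset_eq_degree, ← card_neighborFinset_eq_degree, hzero, hone,
    Finset.card_compl, hthree]
  simp

variable {V : Type*} [Fintype V] {a b c : V}

lemma nonempty_starGraph_sup_edge_iso_ugraph (hV : Fintype.card V = m + 3)
    (hab : a ≠ b) (hac : a ≠ c) (hbc : b ≠ c) :
    Nonempty ((SimpleGraph.starGraph a ⊔ edge b c) ≃g Ugraph (m + 3)) := by
  have hf : Function.Injective ![a, b, c] := by
    simp [Function.Injective, Fin.forall_fin_succ, *, Ne.symm]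
  obtain ⟨e, he⟩ := exists_equiv_apply_eq_of_card_eq (by simpa using hV) hf
    (Fin.castLE_injective (Nat.le_add_left 3 m))
  have hval (i : Fin 3) (u : V) : (e u).val = i ↔ u = ![a, b, c] i := by
    rw [← e.apply_eq_iff_eq, he, Fin.ext_iff, Fin.val_castLE]
  have ha (u : V) : (e u).val = 0 ↔ u = a := hval 0 u
  have hb (u : V) : (e u).val = 1 ↔ u = b := hval 1 u
  have hc (u : V) : (e u).val = 2 ↔ u = c := hval 2 u
  refine ⟨e, fun {u v} => ?_⟩
  simp only [ugraph_adj, sup_adj, starGraph_adj, edge_adj, ha, hb, hc, e.apply_eq_iff_eq, ne_eq]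
  tauto

variable {G : SimpleGraph V}

lemma exists_eq_starGraph_sup_edge [DecidableRel G.Adj] (hG : G.IsVertexCover {a, b})
    (hab : a ≠ b) (ha : G.IsUniversal a) (hb : G.degree b = 2) :
    ∃ c, a ≠ c ∧ b ≠ c ∧ G = SimpleGraph.starGraph a ⊔ edge b c := by
  classical
  have hcard : #((G.neighborFinset b).erase a) = 1 := by
    rw [Finset.card_erase_of_mem (by simpa using (ha hab).symm), card_neighborFinset_eq_degree, hb]
  obtain ⟨c, hc⟩ := Finset.card_eq_one.1 hcard
  have hbc (w : V) : w ≠ a ∧ G.Adj b w ↔ w = c := by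
    rw [← Finset.mem_singleton, ← hc, Finset.mem_erase, mem_neighborFinset]
  obtain ⟨hca, hadj⟩ := (hbc c).2 rfl
  refine ⟨c, hca.symm, hadj.ne, ?_⟩
  ext u v
  simp only [sup_adj, starGraph_adj, edge_adj]
  have huv := @hG u v
  grind [IsUniversal, G.adj_comm, G.ne_of_adj]

lemma nonempty_iso_ugraph_of_isVertexCover_pair [DecidableEq V] [DecidableRel G.Adj]
    (hV : Fintype.card V = m + 3) (hab : a ≠ b) (hG : G.IsVertexCover {a, b})
    (ha : Gᶜ.degree a = 0) (hb : Gᶜ.degree b = m) : Nonempty (G ≃g Ugraph (m + 3)) := by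
  have huniv : G.IsUniversal a := isIsolated_compl_iff_isUniversal.1 ((degree_eq_zero _ _).1 ha)
  have hdeg : G.degree b = 2 := by
    have hlt := G.degree_lt_card_verts b
    rw [degree_compl] at hb
    omega
  obtain ⟨c, hac, hbc, rfl⟩ := exists_eq_starGraph_sup_edge hG hab huniv hdeg
  exact nonempty_starGraph_sup_edge_iso_ugraph hV hab hac hbc

lemma nonempty_iso_ugraph_of_indepPoly_eq (hab : G.Adj a b) (hG : G.IsVertexCover {a, b})
    (h : indepPoly G = indepPoly (Ugraph (m + 3))) : Nonempty (G ≃g Ugraph (m + 3)) := by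
  classical
  have hV : Fintype.card V = m + 3 := by simpa using card_eq_of_indepPoly_eq h
  have hpoly : (1 + X : ℝ[X]) ^ Gᶜ.degree a + (1 + X) ^ Gᶜ.degree b = (1 + X) ^ m + 1 := by
    have hexp : Fintype.card V - 2 = m + 1 := by omega
    rw [indepPoly_eq_of_isVertexCover_pair_of_adj hab hG, indepPoly_ugraph, hexp] at h
    exact mul_left_cancel₀ X_ne_zero (by linear_combination h)
  have hnat : 2 ^ Gᶜ.degree a + 2 ^ Gᶜ.degree b = 2 ^ m + 1 := by
    have hreal := congrArg (eval 1) hpoly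
    simp only [eval_add, eval_pow, eval_one, eval_X, one_add_one_eq_two] at hreal
    exact_mod_cast hreal
  rcases pow_add_pow_eq_pow_add_one one_lt_two hnat with ⟨ha, hb⟩ | ⟨hb, ha⟩
  · exact nonempty_iso_ugraph_of_isVertexCover_pair hV hab.ne hG ha hb
  · exact nonempty_iso_ugraph_of_isVertexCover_pair hV hab.ne' (Set.pair_comm a b ▸ hG) hb ha

end UGraph

section FourCycle

variable {V : Type*} [Fintype V] {a b : V} {G : SimpleGraph V}

lemma nonempty_iso_cycleGraph_four (hV : Fintype.card V = 4) (hab : a ≠ b)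
    (hG : ∀ u v, G.Adj u v ↔ ¬ (u ∈ ({a, b} : Set V) ↔ v ∈ ({a, b} : Set V))) :
    Nonempty (G ≃g cycleGraph 4) := by
  have hf : Function.Injective ![a, b] := by
    simp [Function.Injective, Fin.forall_fin_succ, hab, hab.symm]
  have hg : Function.Injective ![(0 : Fin 4), 2] := by decide
  obtain ⟨e, he⟩ := exists_equiv_apply_eq_of_card_eq (by simpa using hV) hf hg
  have ha : e a = 0 := he 0
  have hb : e b = 2 := he 1
  have hadj : ∀ i j : Fin 4, (cycleGraph 4).Adj i j ↔ ¬ (i = 0 ∨ i = 2 ↔ j = 0 ∨ j = 2) := by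
    decide
  refine ⟨e, fun {u v} => ?_⟩
  change (cycleGraph 4).Adj (e u) (e v) ↔ G.Adj u v
  simp only [hadj, hG, ← ha, ← hb, e.apply_eq_iff_eq, Set.mem_insert_iff, Set.mem_singleton_iff]

lemma adj_iff_of_isVertexCover_pair [DecidableEq V] [DecidableRel G.Adj]
    (hG : G.IsVertexCover {a, b}) (hab : ¬ G.Adj a b) (ha : (Gᶜ.neighborFinset a).erase b = ∅)
    (hb : (Gᶜ.neighborFinset b).erase a = ∅) (u v : V) :
    G.Adj u v ↔ ¬ (u ∈ ({a, b} : Set V) ↔ v ∈ ({a, b} : Set V)) := by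
  have hau (w : V) (hwa : w ≠ a) (hwb : w ≠ b) : G.Adj a w := by
    by_contra hw
    simpa [ha] using (by simp [hwb, hwa.symm, hw] : w ∈ (Gᶜ.neighborFinset a).erase b)
  have hbu (w : V) (hwa : w ≠ a) (hwb : w ≠ b) : G.Adj b w := by
    by_contra hw
    simpa [hb] using (by simp [hwa, hwb.symm, hw] : w ∈ (Gᶜ.neighborFinset b).erase a)
  have huv := @hG u v
  simp only [Set.mem_insert_iff, Set.mem_singleton_iff] at huv ⊢
  grind [G.adj_comm, G.ne_of_adj]

lemma nonempty_iso_cycleGraph_of_indepPoly_eq {m : ℕ} (hne : a ≠ b) (hab : ¬ G.Adj a b)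
    (hG : G.IsVertexCover {a, b}) (h : indepPoly G = indepPoly (Ugraph (m + 3))) :
    m = 1 ∧ Nonempty (G ≃g cycleGraph 4) := by
  classical
  have hV : Fintype.card V = m + 3 := by simpa using card_eq_of_indepPoly_eq h
  have hpoly : (1 + X : ℝ[X]) ^ #((Gᶜ.neighborFinset a).erase b)
      + (1 + X) ^ #((Gᶜ.neighborFinset b).erase a)
      + X * (1 + X) ^ #(Gᶜ.neighborFinset a ∩ Gᶜ.neighborFinset b) = (1 + X) ^ m + 1 := by
    have hexp : Fintype.card V - 2 = m + 1 := by omega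
    rw [indepPoly_eq_of_isVertexCover_pair_of_not_adj hne hab hG, indepPoly_ugraph, hexp] at h
    exact mul_left_cancel₀ X_ne_zero (by linear_combination h)
  have hZa : Gᶜ.neighborFinset a ∩ Gᶜ.neighborFinset b ⊆ (Gᶜ.neighborFinset a).erase b :=
    Finset.subset_erase.2 ⟨Finset.inter_subset_left, by simp⟩
  have hZb : Gᶜ.neighborFinset a ∩ Gᶜ.neighborFinset b ⊆ (Gᶜ.neighborFinset b).erase a :=
    Finset.subset_erase.2 ⟨Finset.inter_subset_right, by simp⟩
  obtain ⟨ha, hb, rfl⟩ := eq_zero_and_eq_zero_and_eq_one_of_one_add_X_pow_eq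
    (Finset.card_le_card hZa) (Finset.card_le_card hZb) hpoly
  rw [Finset.card_eq_zero] at ha hb
  exact ⟨rfl, nonempty_iso_cycleGraph_four hV hne (adj_iff_of_isVertexCover_pair hG hab ha hb)⟩

end FourCycle

end

/-- If `I(G,x) = I(U_n,x)` (`n ≥ 3`) then `G ≅ U_n`, or `n = 4` and `G ≅ C_4`. -/
theorem stmt0 {V : Type*} [Fintype V] (n : ℕ) (hn : 3 ≤ n) (G : SimpleGraph V)
    (h : indepPoly G = indepPoly (Ugraph n)) :
    Nonempty (G ≃g Ugraph n) ∨ (n = 4 ∧ Nonempty (G ≃g cycleGraph n)) := by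
  classical
  obtain ⟨m, rfl⟩ : ∃ m, n = m + 3 := ⟨n - 3, by omega⟩
  have hcover : (Ugraph (m + 3)).IsVertexCover ({0, 1} : Finset (Fin (m + 3))) := by
    simpa using isVertexCover_ugraph
  obtain ⟨C, hC, hcard⟩ := exists_isVertexCover_card_eq_of_indepPoly_eq h hcover
  obtain ⟨a, b, hne, rfl⟩ := Finset.card_eq_two.1 (hcard.trans (Finset.card_pair (by simp)))
  rw [Finset.coe_pair] at hC
  by_cases hab : G.Adj a b
  · exact .inl (nonempty_iso_ugraph_of_indepPoly_eq hab hC h)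
  · obtain ⟨rfl, hiso⟩ := nonempty_iso_cycleGraph_of_indepPoly_eq hne hab hC h
    exact .inr ⟨rfl, hiso⟩
end

section
/- Let n ≥ 3 and let G be a connected unicyclic graph on n vertices that is isomorphic to none of C_n, U_n, and (when n ≥ 4) D_n. Then C_n ≺ G and G ≺ U_n. -/
/-!
If `I(G, ·)` is positive on `[x, 0]`, then at `x` the independence polynomials of all induced
subgraphs of `G` are positive and strictly decrease as vertices are added. By continuity,
`H ≺ G` follows once `I(G, x) < I(H, x)` is known at such points `x < 0`.

For a connected graph on `k` vertices, the ratio of its polynomial to the one obtained by deleting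
a vertex is at most the ratio for an end vertex of a path, with equality only for paths. So the
path has the largest polynomial among connected graphs of its order. Deleting an edge `ab` of a
cycle of `G` leaves a connected graph `H` with
`I(G, x) = I(H, x) - x ^ 2 * I(G - (N(a) ∪ N(b)), x)`. If `N(a) ∪ N(b)` has at least `4` vertices,
then iterating the ratio bound compares the right-hand side with `I(C_n, x)`. Equality would make
`H` a path and `N(a) ∪ N(b)` a set of exactly `4` vertices, and then `G` is `C_n` or `D_n`.

In the other direction, the star has the smallest polynomial among trees. A connected unicyclic
graph has a vertex whose deletion leaves a tree (if it has degree `2`) or a unicyclic graph (if it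
is a leaf), and induction on this vertex gives the lower bound `I(U_n, x)`; equality forces `U_n`
or the `4`-cycle.
-/

open Polynomial SimpleGraph

section InducedSubgraphs

open Finset

variable {V : Type*} {G H : SimpleGraph V} {A B C : Finset V} {a b v : V} {x : ℝ}

open Classical in
/-- The value at `x` of the independence polynomial of the subgraph of `G` induced by `A`. All
inductions run over the vertex sets `A` of induced subgraphs of a fixed graph. -/
noncomputable def indepEval (G : SimpleGraph V) (A : Finset V) (x : ℝ) : ℝ :=
  ∑ s ∈ A.powerset with IsIndepFinset G s, x ^ #s

open Classical in
/-- The neighbors of `v` in `A`. -/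
noncomputable def neighborsIn (G : SimpleGraph V) (v : V) (A : Finset V) : Finset V :=
  {u ∈ A | G.Adj v u}

open Classical in
/-- The vertices of `A` not adjacent to `v`; this set contains `v` if `A` does. -/
noncomputable def nonneighborsIn (G : SimpleGraph V) (v : V) (A : Finset V) : Finset V :=
  {u ∈ A | ¬ G.Adj v u}

/-- Two vertex sets are separated: they are disjoint and no edge joins them. -/
def Separated (G : SimpleGraph V) (A B : Finset V) : Prop :=
  Disjoint A B ∧ ∀ a ∈ A, ∀ b ∈ B, ¬ G.Adj a b

/-- All induced subgraphs of the subgraph induced by `A` have a positive independence polynomial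
at `x`. -/
def HereditarilyPos (G : SimpleGraph V) (x : ℝ) (A : Finset V) : Prop :=
  ∀ S ⊆ A, 0 < indepEval G S x

@[simp]
lemma mem_neighborsIn {u : V} : u ∈ neighborsIn G v A ↔ u ∈ A ∧ G.Adj v u := by
  simp [neighborsIn]

@[simp]
lemma mem_nonneighborsIn {u : V} : u ∈ nonneighborsIn G v A ↔ u ∈ A ∧ ¬ G.Adj v u := by
  simp [nonneighborsIn]

lemma neighborsIn_subset : neighborsIn G v A ⊆ A := fun _ hu => (mem_neighborsIn.1 hu).1

lemma nonneighborsIn_subset : nonneighborsIn G v A ⊆ A :=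
  fun _ hu => (mem_nonneighborsIn.1 hu).1

lemma nonneighborsIn_eq_sdiff [DecidableEq V] :
    nonneighborsIn G v A = A \ neighborsIn G v A := by
  grind [mem_neighborsIn, mem_nonneighborsIn]

lemma card_nonneighborsIn_add : #(nonneighborsIn G v A) + #(neighborsIn G v A) = #A := by
  classical
  rw [nonneighborsIn_eq_sdiff, card_sdiff_add_card_eq_card neighborsIn_subset]

lemma nonneighborsIn_eq_self (h : ∀ u ∈ A, ¬ G.Adj v u) : nonneighborsIn G v A = A :=
  nonneighborsIn_subset.antisymm fun u hu => mem_nonneighborsIn.2 ⟨hu, h u hu⟩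

namespace Separated

lemma symm (h : Separated G A B) : Separated G B A :=
  ⟨h.1.symm, fun b hb a ha hba => h.2 a ha b hb hba.symm⟩

lemma mono {A' B' : Finset V} (h : Separated G A B) (hA : A' ⊆ A) (hB : B' ⊆ B) :
    Separated G A' B' :=
  ⟨h.1.mono hA hB, fun a ha b hb => h.2 a (hA ha) b (hB hb)⟩

end Separated

lemma isIndepFinset_insert [DecidableEq V] {s : Finset V} :
    IsIndepFinset G (insert v s) ↔ s ⊆ nonneighborsIn G v s ∧ IsIndepFinset G s := by
  simp only [IsIndepFinset, mem_insert, forall_eq_or_imp, SimpleGraph.irrefl, not_false_iff,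
    subset_iff, mem_nonneighborsIn, G.adj_comm _ v]
  grind

@[simp]
lemma indepEval_empty : indepEval G ∅ x = 1 := by
  classical
  rw [indepEval, powerset_empty, filter_singleton, if_pos (by simp [IsIndepFinset])]
  simp

lemma indepEval_insert [DecidableEq V] (hv : v ∉ A) :
    indepEval G (insert v A) x = indepEval G A x + x * indepEval G (nonneighborsIn G v A) x := by
  classical
  have hcontaining : {s ∈ A.powerset | IsIndepFinset G (insert v s)} =
      {s ∈ (nonneighborsIn G v A).powerset | IsIndepFinset G s} := by
    ext s
    simp only [mem_filter, mem_powerset, isIndepFinset_insert]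
    grind [mem_nonneighborsIn]
  rw [indepEval, sum_filter, sum_powerset_insert hv, ← sum_filter, ← sum_filter, hcontaining,
    indepEval, indepEval, mul_sum]
  congr 1
  refine sum_congr rfl fun s hs => ?_
  have hvs : v ∉ s := fun h =>
    hv (nonneighborsIn_subset (mem_powerset.1 (mem_filter.1 hs).1 h))
  rw [card_insert_of_notMem hvs, pow_succ']

lemma indepEval_erase [DecidableEq V] (hv : v ∈ A) :
    indepEval G A x =
      indepEval G (A.erase v) x + x * indepEval G (nonneighborsIn G v (A.erase v)) x := by
  rw [← indepEval_insert (notMem_erase v A), insert_erase hv]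

lemma indepEval_congr (h : ∀ u ∈ A, ∀ v ∈ A, (G.Adj u v ↔ H.Adj u v)) :
    indepEval G A x = indepEval H A x := by
  classical
  refine sum_congr (filter_congr fun s hs => ?_) fun _ _ => rfl
  have hsA := mem_powerset.1 hs
  exact forall₂_congr fun u hu => forall₂_congr fun v hv => not_congr (h u (hsA hu) v (hsA hv))

lemma indepEval_union [DecidableEq V] (h : Separated G A B) :
    indepEval G (A ∪ B) x = indepEval G A x * indepEval G B x := by
  induction B using Finset.strongInduction with
  | H B ih =>
  rcases B.eq_empty_or_nonempty with rfl | ⟨v, hv⟩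
  · simp
  have hvA : v ∉ A := fun hvA => disjoint_left.1 h.1 hvA hv
  have herase : (A ∪ B).erase v = A ∪ B.erase v := by
    rw [erase_union_distrib, erase_eq_of_notMem hvA]
  have hnonneighbors : nonneighborsIn G v (A ∪ B.erase v) = A ∪ nonneighborsIn G v (B.erase v) := by
    have := h.2
    grind [mem_nonneighborsIn, SimpleGraph.adj_comm]
  have hlt := erase_ssubset hv
  have hle : nonneighborsIn G v (B.erase v) ⊆ B.erase v := nonneighborsIn_subset
  rw [indepEval_erase (mem_union_right A hv), herase, hnonneighbors, indepEval_erase hv,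
    ih _ hlt (h.mono le_rfl hlt.1),
    ih _ (hle.trans_ssubset hlt) (h.mono le_rfl (hle.trans hlt.1))]
  ring

lemma eval_indepPoly [Fintype V] : (indepPoly G).eval x = indepEval G univ x := by
  classical
  rw [indepPoly, indepEval, powerset_univ, sum_filter, eval_finsetSum]
  exact sum_congr rfl fun s _ => by split_ifs <;> simp

lemma indepEval_zero : indepEval G A 0 = 1 := by
  classical
  induction A using Finset.induction_on with
  | empty => exact indepEval_empty
  | insert v A hv ih => rw [indepEval_insert hv, ih, zero_mul, add_zero]

lemma indepEval_singleton : indepEval G {v} x = 1 + x := by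
  classical
  rw [← insert_empty_eq, indepEval_insert (notMem_empty v), indepEval_empty,
    subset_empty.1 nonneighborsIn_subset, indepEval_empty, mul_one]

lemma continuous_indepEval : Continuous (indepEval G A) := by
  unfold indepEval
  fun_prop

/-- The independent sets gained by deleting the edge `ab` are those containing `a` and `b`. -/
lemma indepEval_deleteEdges_singleton (hab : G.Adj a b) (ha : a ∈ A) (hb : b ∈ A) :
    indepEval (G.deleteEdges {s(a, b)}) A x =
      indepEval G A x + x ^ 2 * indepEval G (nonneighborsIn G b (nonneighborsIn G a A)) x := by
  classical
  set H := G.deleteEdges {s(a, b)} with hH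
  have hadj : ∀ u w, H.Adj u w ↔ G.Adj u w ∧ ¬ (u = a ∧ w = b ∨ u = b ∧ w = a) := by
    simp [hH, deleteEdges_adj]
  have heval : ∀ S : Finset V, a ∉ S → indepEval H S x = indepEval G S x := fun S hS =>
    indepEval_congr fun u hu w hw => by grind
  have hne := hab.ne
  have hAa : nonneighborsIn H a (A.erase a) = insert b (nonneighborsIn G a (A.erase a)) := by
    grind [mem_nonneighborsIn]
  have hAb : nonneighborsIn H b (nonneighborsIn G a (A.erase a)) =
      nonneighborsIn G b (nonneighborsIn G a A) := by
    grind [mem_nonneighborsIn, SimpleGraph.adj_comm]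
  have hb' : b ∉ nonneighborsIn G a (A.erase a) := fun h => (mem_nonneighborsIn.1 h).2 hab
  rw [indepEval_erase ha, indepEval_erase (G := G) ha, hAa, indepEval_insert hb', hAb,
    heval _ (notMem_erase a A), heval _ (by simp), heval _ (by simp [hab.symm])]
  ring

end InducedSubgraphs

section Positivity

open Finset

variable {V : Type*} {G : SimpleGraph V} {A B : Finset V} {a b v : V} {x : ℝ}

lemma exists_last_nonpos {f : ℝ → ℝ} (hf : Continuous f) {y c : ℝ} (hyc : y ≤ c)
    (hfy : f y ≤ 0) : ∃ z ∈ Set.Icc y c, f z ≤ 0 ∧ ∀ t ∈ Set.Ioc z c, 0 < f t := by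
  have hcompact : IsCompact (Set.Icc y c ∩ {t | f t ≤ 0}) :=
    isCompact_Icc.inter_right (isClosed_le hf continuous_const)
  obtain ⟨z, ⟨hz, hfz⟩, hmax⟩ := hcompact.exists_isGreatest ⟨y, ⟨le_rfl, hyc⟩, hfy⟩
  refine ⟨z, hz, hfz, fun t ht => ?_⟩
  by_contra hft
  exact (hmax ⟨⟨hz.1.trans ht.1.le, ht.2⟩, not_lt.1 hft⟩).not_gt ht.1

namespace HereditarilyPos

lemma self (h : HereditarilyPos G x A) : 0 < indepEval G A x := h A le_rfl

lemma mono (h : HereditarilyPos G x A) (hBA : B ⊆ A) : HereditarilyPos G x B :=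
  fun S hS => h S (hS.trans hBA)

/-- At the last point `z` where `I(G[A - v])` is not positive, the recurrence
`I(G[A]) = I(G[A - v]) + z I(G[A - N[v]])` would give `I(G[A], z) ≤ 0`. -/
lemma of_pos_Icc (hx : x ≤ 0) (hpos : ∀ y ∈ Set.Icc x 0, 0 < indepEval G A y) :
    HereditarilyPos G x A := by
  classical
  induction A using Finset.strongInduction generalizing x with
  | H A ih =>
  intro S hSA
  obtain rfl | ⟨v, hvA, hSv⟩ : S = A ∨ ∃ v ∈ A, S ⊆ A.erase v := by
    rcases hSA.eq_or_ssubset with h | h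
    · exact .inl h
    · obtain ⟨v, hvA, hvS⟩ := exists_of_ssubset h
      exact .inr ⟨v, hvA, subset_erase.2 ⟨hSA, hvS⟩⟩
  · exact hpos x ⟨le_rfl, hx⟩
  refine ih _ (erase_ssubset hvA) hx (fun y hy => ?_) S hSv
  by_contra hneg
  obtain ⟨z, hz, hfz, hlast⟩ :=
    exists_last_nonpos (continuous_indepEval (A := A.erase v)) hy.2 (not_lt.1 hneg)
  have hz0 : z < 0 := hz.2.lt_of_ne fun h => by
    rw [h, indepEval_zero] at hfz
    linarith
  have hnonneighbors : 0 ≤ indepEval G (nonneighborsIn G v (A.erase v)) z := by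
    have htendsto : Filter.Tendsto (indepEval G (nonneighborsIn G v (A.erase v)))
        (nhdsWithin z (Set.Ioi z)) (nhds _) := continuous_indepEval.continuousWithinAt
    refine ge_of_tendsto htendsto ?_
    filter_upwards [Ioc_mem_nhdsGT hz0] with t ht
    exact (ih _ (erase_ssubset hvA) ht.2 (fun s hs => hlast s ⟨ht.1.trans_le hs.1, hs.2⟩) _
      nonneighborsIn_subset).le
  have hA := hpos z ⟨hy.1.trans hz.1, hz.2⟩
  rw [indepEval_erase hvA] at hA
  linarith [mul_nonpos_of_nonpos_of_nonneg hz.2 hnonneighbors]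

lemma of_le {f : ℝ → ℝ} (hx : x ≤ 0)
    (hf : ∀ y ∈ Set.Ico x 0, 0 < f y ∧ f y ≤ indepEval G A y) : HereditarilyPos G x A := by
  refine of_pos_Icc hx fun y hy => ?_
  rcases hy.2.eq_or_lt with rfl | hy0
  · exact indepEval_zero.symm ▸ one_pos
  · exact (hf y ⟨hy.1, hy0⟩).1.trans_le (hf y ⟨hy.1, hy0⟩).2

lemma indepEval_lt_erase [DecidableEq V] (h : HereditarilyPos G x A) (hx : x < 0) (hv : v ∈ A) :
    indepEval G A x < indepEval G (A.erase v) x := by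
  rw [indepEval_erase hv]
  have hpos := h (nonneighborsIn G v (A.erase v)) (nonneighborsIn_subset.trans (erase_subset v A))
  linarith [mul_neg_of_neg_of_pos hx hpos]

lemma indepEval_lt (h : HereditarilyPos G x A) (hx : x < 0) (hBA : B ⊂ A) :
    indepEval G A x < indepEval G B x := by
  classical
  induction A using Finset.strongInduction with
  | H A ih =>
  obtain ⟨v, hvA, hvB⟩ := exists_of_ssubset hBA
  have hlt := h.indepEval_lt_erase hx hvA
  have hsub : B ⊆ A.erase v := subset_erase.2 ⟨hBA.1, hvB⟩
  rcases hsub.eq_or_ssubset with rfl | hss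
  · exact hlt
  · exact hlt.trans (ih _ (erase_ssubset hvA) (h.mono (erase_subset v A)) hss)

lemma indepEval_le (h : HereditarilyPos G x A) (hx : x < 0) (hBA : B ⊆ A) :
    indepEval G A x ≤ indepEval G B x := by
  rcases hBA.eq_or_ssubset with rfl | hss
  · exact le_rfl
  · exact (h.indepEval_lt hx hss).le

lemma deleteEdges_singleton (h : HereditarilyPos G x A) (hab : G.Adj a b) :
    HereditarilyPos (G.deleteEdges {s(a, b)}) x A := by
  intro S hS
  by_cases hmem : a ∈ S ∧ b ∈ S
  · rw [indepEval_deleteEdges_singleton hab hmem.1 hmem.2]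
    have hsub : nonneighborsIn G b (nonneighborsIn G a S) ⊆ S :=
      nonneighborsIn_subset.trans nonneighborsIn_subset
    exact add_pos_of_pos_of_nonneg (h S hS) (mul_nonneg (sq_nonneg x) (h _ (hsub.trans hS)).le)
  · rw [indepEval_congr (H := G) fun u hu w hw => by grind [deleteEdges_adj, Sym2.eq_iff]]
    exact h S hS

end HereditarilyPos

end Positivity

/-- `pathEval x (k + 1)` is the value at `x` of the independence polynomial of the path on `k`
vertices. The shift makes room for the formal path on `-1` vertices, whose value `pathEval x 0 = 1`
is the one dictated by the recurrence. -/
noncomputable def pathEval (x : ℝ) : ℕ → ℝ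
  | 0 => 1
  | 1 => 1
  | k + 2 => pathEval x (k + 1) + x * pathEval x k

/-- The vertices `f 0, …, f (N - 1)` are distinct and induce a path of `G`, in this order. -/
def IsInducedPath {V : Type*} (G : SimpleGraph V) (f : ℕ → V) (N : ℕ) : Prop :=
  ∀ i < N, ∀ j < N, (f i = f j → i = j) ∧ (G.Adj (f i) (f j) ↔ i + 1 = j ∨ j + 1 = i)

section Paths

open Finset

variable {x : ℝ}

lemma pathEval_zero : pathEval x 0 = 1 := rfl

lemma pathEval_one : pathEval x 1 = 1 := rfl

lemma pathEval_add_two (k : ℕ) :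
    pathEval x (k + 2) = pathEval x (k + 1) + x * pathEval x k := rfl

lemma pathEval_add (a b : ℕ) : pathEval x (a + b + 2) =
    pathEval x (a + 1) * pathEval x (b + 1) + x * (pathEval x a * pathEval x b) := by
  induction a generalizing b with
  | zero => simp only [zero_add, pathEval_add_two, pathEval_zero, pathEval_one, one_mul]
  | succ a ih =>
    rw [show a + 1 + b + 2 = a + (b + 1) + 2 by ring, ih (b + 1), pathEval_add_two a,
      pathEval_add_two b]
    ring

lemma pathEval_add_three (a b : ℕ) : pathEval x (a + b + 3) =
    pathEval x (a + 2) * pathEval x (b + 2) - x ^ 2 * (pathEval x a * pathEval x b) := by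
  rw [show a + b + 3 = (a + 1) + b + 2 by ring, pathEval_add, pathEval_add_two b,
    pathEval_add_two a]
  ring

lemma pathEval_add_le_mul {a b : ℕ} (h : ∀ k ≤ a + b, 0 < pathEval x k) :
    pathEval x (a + b + 1) ≤ pathEval x (a + 1) * pathEval x (b + 1) := by
  rcases a with _ | a
  · rw [zero_add, zero_add, pathEval_one, one_mul]
  rcases b with _ | b
  · rw [zero_add, add_zero, pathEval_one, mul_one]
  rw [show a + 1 + (b + 1) + 1 = a + b + 3 by ring, pathEval_add_three]
  have hpos := mul_pos (h a (by omega)) (h b (by omega))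
  linarith [mul_nonneg (sq_nonneg x) hpos.le]

lemma pathEval_lt (hx : x < 0) {i j : ℕ} (h : ∀ k ≤ j, 0 < pathEval x k) (hij : i < j) :
    pathEval x (j + 1) < pathEval x (i + 1) := by
  have hstep : ∀ k ≤ j, pathEval x (k + 2) < pathEval x (k + 1) := fun k hk => by
    rw [pathEval_add_two]
    linarith [mul_neg_of_neg_of_pos hx (h k hk)]
  induction j, hij using Nat.le_induction with
  | base => exact hstep i (Nat.le_succ i)
  | succ j _ ih =>
    exact (hstep j (Nat.le_succ j)).trans
      (ih (fun k hk => h k (by omega)) fun k hk => hstep k (by omega))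

variable {V : Type*} {G : SimpleGraph V} {f : ℕ → V} {N : ℕ} {A : Finset V} {v : V}

namespace IsInducedPath

lemma mono {M : ℕ} (h : IsInducedPath G f N) (hMN : M ≤ N) : IsInducedPath G f M :=
  fun i hi j hj => h i (hi.trans_le hMN) j (hj.trans_le hMN)

lemma indepEval_image [DecidableEq V] (h : IsInducedPath G f N) :
    indepEval G ((range N).image f) x = pathEval x (N + 1) := by
  induction N using Nat.twoStepInduction with
  | zero => rw [range_zero, image_empty, indepEval_empty, pathEval_one]
  | one =>
    rw [range_one, image_singleton, indepEval_singleton, pathEval_add_two, pathEval_one,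
      pathEval_zero, mul_one]
  | more N ihN ihN' =>
    have hlast : f (N + 1) ∉ (range (N + 1)).image f := fun hmem => by
      obtain ⟨i, hi, hfi⟩ := mem_image.1 hmem
      have := (h i (by grind) (N + 1) (by omega)).1 hfi
      grind
    have hnonneighbors : nonneighborsIn G (f (N + 1)) ((range (N + 1)).image f) =
        (range N).image f := by
      ext u
      have hadj : ∀ i < N + 1, G.Adj (f (N + 1)) (f i) ↔ i = N := fun i hi =>
        (h (N + 1) (by omega) i (by omega)).2.trans (by omega)
      grind [mem_nonneighborsIn]
    rw [range_add_one, image_insert, indepEval_insert hlast, hnonneighbors, ihN (h.mono (by omega)),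
      ihN' (h.mono (by omega)), ← pathEval_add_two]

lemma singleton (v : V) : IsInducedPath G (fun _ => v) 1 := by
  intro i hi j hj
  simp only [SimpleGraph.irrefl, false_iff]
  omega

lemma cons (h : IsInducedPath G f N) (hv : ∀ i < N, f i ≠ v)
    (hadj : ∀ i < N, (G.Adj v (f i) ↔ i = 0)) :
    IsInducedPath G (fun i => if i = 0 then v else f (i - 1)) (N + 1) := by
  intro i hi j hj
  rcases i with _ | i <;> rcases j with _ | j
  · simp
  · have := hv j (by omega)
    have := hadj j (by omega)
    grind
  · have := hv i (by omega)
    have := hadj i (by omega)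
    grind [SimpleGraph.adj_comm]
  · have := h i (by omega) j (by omega)
    grind

end IsInducedPath

end Paths

/-- The subgraph of `G` induced by the finite set `A` is connected. -/
def ConnectedOn {V : Type*} (G : SimpleGraph V) (A : Finset V) : Prop :=
  (G.induce (A : Set V)).Connected

section Connectivity

open Finset

variable {V : Type*} {G : SimpleGraph V} {A B C D S : Finset V} {a b u v w : V}

lemma connectedOn_iff_exists_boundary_edge : ConnectedOn G A ↔ A.Nonempty ∧
    ∀ B ⊆ A, B.Nonempty → B ≠ A → ∃ u ∈ B, ∃ v ∈ A, v ∉ B ∧ G.Adj u v := by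
  classical
  constructor
  · intro hconn
    refine ⟨?_, fun B hBA ⟨a, ha⟩ hne => ?_⟩
    · obtain ⟨a⟩ := hconn.nonempty
      exact ⟨a, a.2⟩
    obtain ⟨c, hcA, hcB⟩ := exists_of_ssubset (hBA.ssubset_of_ne hne)
    obtain ⟨p⟩ := hconn.preconnected ⟨a, hBA ha⟩ ⟨c, hcA⟩
    obtain ⟨d, -, hfst, hsnd⟩ := p.exists_boundary_dart {z | z.1 ∈ B} ha hcB
    exact ⟨d.fst, hfst, d.snd, d.snd.2, hsnd, d.adj⟩
  · rintro ⟨⟨a, ha⟩, hcut⟩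
    let R : Finset V := {z ∈ A | ∃ hz : z ∈ A, (G.induce (A : Set V)).Reachable ⟨a, ha⟩ ⟨z, hz⟩}
    have hmemR : ∀ {z}, z ∈ R ↔ ∃ hz : z ∈ A, (G.induce (A : Set V)).Reachable ⟨a, ha⟩ ⟨z, hz⟩ := by
      grind
    suffices hR : R = A from connected_iff_exists_forall_reachable _ |>.2
      ⟨⟨a, ha⟩, fun z => (hmemR.1 (hR.symm ▸ z.2 : z.1 ∈ R)).2⟩
    by_contra hne
    obtain ⟨u, hu, v, hvA, hv, huv⟩ :=
      hcut R (filter_subset _ _) ⟨a, hmemR.2 ⟨ha, Reachable.refl _⟩⟩ hne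
    obtain ⟨huA, hreach⟩ := hmemR.1 hu
    have hadj : (G.induce (A : Set V)).Adj ⟨u, huA⟩ ⟨v, hvA⟩ := huv
    exact hv (hmemR.2 ⟨hvA, hreach.trans hadj.reachable⟩)

lemma connectedOn_univ [Fintype V] : ConnectedOn G univ ↔ G.Connected := by
  rw [ConnectedOn, coe_univ]
  exact (induceUnivIso G).connected_iff

lemma exists_separated_of_not_connectedOn [DecidableEq V] (hA : A.Nonempty)
    (h : ¬ ConnectedOn G A) :
    ∃ C D, C.Nonempty ∧ D.Nonempty ∧ Separated G C D ∧ C ∪ D = A := by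
  simp only [connectedOn_iff_exists_boundary_edge, hA, true_and] at h
  push Not at h
  obtain ⟨C, hCA, hC, hne, hboundary⟩ := h
  refine ⟨C, A \ C, hC, sdiff_nonempty.2 fun hAC => hne (hCA.antisymm hAC),
    ⟨disjoint_sdiff, fun a ha b hb => ?_⟩, union_sdiff_of_subset hCA⟩
  exact hboundary a ha b (mem_sdiff.1 hb).1 (mem_sdiff.1 hb).2

namespace ConnectedOn

lemma nonempty (h : ConnectedOn G A) : A.Nonempty :=
  (connectedOn_iff_exists_boundary_edge.1 h).1

lemma exists_boundary_edge (h : ConnectedOn G A) (hBA : B ⊆ A) (hB : B.Nonempty) (hne : B ≠ A) :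
    ∃ u ∈ B, ∃ v ∈ A, v ∉ B ∧ G.Adj u v :=
  (connectedOn_iff_exists_boundary_edge.1 h).2 B hBA hB hne

lemma singleton (v : V) : ConnectedOn G {v} := by
  refine connectedOn_iff_exists_boundary_edge.2 ⟨singleton_nonempty v, fun B hB hne hne' => ?_⟩
  exact absurd ((subset_singleton_iff.1 hB).resolve_left hne.ne_empty) hne'

lemma insert_of_adj [DecidableEq V] (h : ConnectedOn G A) (ha : a ∈ A) (hav : G.Adj a v) :
    ConnectedOn G (insert v A) := by
  have hunion : ((insert v A : Finset V) : Set V) = {v, a} ∪ (A : Set V) := by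
    rw [coe_insert, Set.insert_union, Set.singleton_union, Set.insert_eq_of_mem (mem_coe.2 ha)]
  rw [ConnectedOn, hunion]
  exact induce_union_connected (induce_pair_connected_of_adj hav.symm).preconnected
    h.preconnected ⟨a, by simp, ha⟩

lemma exists_erase [DecidableEq V] (h : ConnectedOn G A) (hA : 2 ≤ #A) :
    ∃ w ∈ A, ConnectedOn G (A.erase w) := by
  have : Nontrivial (A : Set V) := Set.nontrivial_coe_sort.2 (one_lt_card_iff_nontrivial.1 hA)
  obtain ⟨w, hw⟩ := h.exists_connected_induce_compl_singleton_of_finite_nontrivial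
  let e : (G.induce (A : Set V)).induce {w}ᶜ →g G.induce (A.erase w.1 : Finset V) :=
    { toFun := fun z => ⟨z.1.1, mem_coe.2 (mem_erase.2 ⟨fun hz => z.2 (Subtype.ext hz), z.1.2⟩)⟩
      map_rel' := id }
  refine ⟨w, w.2, hw.map e fun z => ?_⟩
  obtain ⟨hzw, hzA⟩ := mem_erase.1 z.2
  exact ⟨⟨⟨z, hzA⟩, fun hz => hzw (congrArg Subtype.val hz)⟩, rfl⟩

lemma insert_of_insert_union [DecidableEq V] (h : ConnectedOn G (insert w (C ∪ D)))
    (hsep : Separated G C D) : ConnectedOn G (insert w C) := by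
  have hedge : ∀ B ⊆ C, B.Nonempty → w ∉ B → ∃ u ∈ B, ∃ v ∈ insert w C, v ∉ B ∧ G.Adj u v := by
    intro B hBC hB hwB
    obtain ⟨u, hu, v, hv, hvB, huv⟩ := h.exists_boundary_edge (B := B) (by grind) hB (by grind)
    have : v ∉ D := fun hvD => hsep.2 u (hBC hu) v hvD huv
    exact ⟨u, hu, v, by grind, hvB, huv⟩
  refine connectedOn_iff_exists_boundary_edge.2 ⟨insert_nonempty w C, fun B hB hBne hne => ?_⟩
  by_cases hwB : w ∈ B
  · obtain ⟨u, hu, v, hv, hvB, huv⟩ := hedge (insert w C \ B) (by grind)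
      (sdiff_nonempty.2 fun hsub => hne (hB.antisymm hsub)) (by grind)
    exact ⟨v, by grind, u, by grind, by grind, huv.symm⟩
  · exact hedge B (by grind) hBne hwB

/-- Among the connected sets avoiding some vertex of `S`, one of maximal size works. -/
lemma exists_component_erase [DecidableEq V] (h : ConnectedOn G A) (hA : 2 ≤ #A) (hSA : S ⊆ A)
    (hS : S.Nonempty) : ∃ v ∈ S, ∃ C ⊆ A.erase v,
      ConnectedOn G C ∧ Separated G C (A.erase v \ C) ∧ S.erase v ⊆ C := by
  classical
  let P : Finset (V × Finset V) := {p ∈ S ×ˢ A.powerset | p.1 ∉ p.2 ∧ ConnectedOn G p.2}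
  have hP : P.Nonempty := by
    obtain ⟨s, hs⟩ := hS
    obtain ⟨t, ht, hts⟩ := exists_mem_ne hA s
    exact ⟨(s, {t}), by simp [P, hs, ht, hts.symm, singleton t]⟩
  obtain ⟨⟨v, C⟩, hvC, hmax⟩ := exists_max_image P (fun p => #p.2) hP
  simp only [P, mem_filter, mem_product, mem_powerset, Prod.forall] at hvC hmax
  obtain ⟨⟨hvS, hCA⟩, hvC, hC⟩ := hvC
  have hgrow : ∀ z ∈ S, z ∉ C → ∀ u ∈ C, ∀ t ∈ A, t ∉ C → G.Adj u t → t = z := by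
    intro z hz hzC u hu t ht htC hut
    by_contra htz
    have hle := hmax z (insert t C) ⟨⟨hz, insert_subset ht hCA⟩,
      by simp [hzC, Ne.symm htz], hC.insert_of_adj hu hut⟩
    rw [card_insert_of_notMem htC] at hle
    omega
  refine ⟨v, hvS, C, subset_erase.2 ⟨hCA, hvC⟩, hC,
    ⟨disjoint_sdiff, fun u hu t ht hut => ?_⟩, fun z hz => ?_⟩
  · have := hgrow v hvS hvC u hu t
    grind
  · by_contra hzC
    obtain ⟨u, hu, t, ht, htC, hut⟩ := h.exists_boundary_edge hCA hC.nonempty (by grind)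
    have := hgrow v hvS hvC u hu t ht htC hut
    have := hgrow z (mem_of_mem_erase hz) hzC u hu t ht htC hut
    grind

end ConnectedOn

end Connectivity

section DeletionRatio

open Finset

variable {V : Type*} {G : SimpleGraph V} {x : ℝ} {A B C D S : Finset V} {w : V}

lemma indepEval_insert_mul_pathEval_sub [DecidableEq V] (hw : w ∉ A) (m : ℕ) :
    indepEval G (insert w A) x * pathEval x (m + 1) - indepEval G A x * pathEval x (m + 2) =
      x * (indepEval G (nonneighborsIn G w A) x * pathEval x (m + 1) -
        indepEval G A x * pathEval x m) := by
  rw [indepEval_insert hw, pathEval_add_two]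
  ring

lemma indepEval_insert_mul_pathEval_le_iff [DecidableEq V] (hx : x < 0) (hw : w ∉ A) (m : ℕ) :
    indepEval G (insert w A) x * pathEval x (m + 1) ≤ indepEval G A x * pathEval x (m + 2) ↔
      indepEval G A x * pathEval x m ≤
        indepEval G (nonneighborsIn G w A) x * pathEval x (m + 1) := by
  rw [← sub_nonpos, indepEval_insert_mul_pathEval_sub hw, ← sub_nonneg (b := _ * pathEval x m)]
  exact ⟨fun h => by_contra fun hneg => h.not_gt (mul_pos_of_neg_of_neg hx (not_le.1 hneg)),
    mul_nonpos_of_nonpos_of_nonneg hx.le⟩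

lemma indepEval_insert_mul_pathEval_eq_iff [DecidableEq V] (hx : x < 0) (hw : w ∉ A) (m : ℕ) :
    indepEval G (insert w A) x * pathEval x (m + 1) = indepEval G A x * pathEval x (m + 2) ↔
      indepEval G A x * pathEval x m =
        indepEval G (nonneighborsIn G w A) x * pathEval x (m + 1) := by
  rw [← sub_eq_zero, indepEval_insert_mul_pathEval_sub hw, mul_eq_zero, or_iff_right hx.ne,
    sub_eq_zero, eq_comm]

lemma indepEval_insert_union_mul_le [DecidableEq V] (hx : x < 0) (hwC : w ∉ C) (hwD : w ∉ D)
    (hsep : Separated G C D) (h : HereditarilyPos G x (C ∪ D)) {c d : ℕ}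
    (hc : 0 < pathEval x (c + 1)) (hd : 0 < pathEval x d)
    (hC : indepEval G (insert w C) x * pathEval x (c + 1) ≤ indepEval G C x * pathEval x (c + 2))
    (hD : indepEval G (insert w D) x * pathEval x (d + 1) ≤ indepEval G D x * pathEval x (d + 2)) :
    indepEval G (insert w (C ∪ D)) x * (pathEval x (c + 1) * pathEval x (d + 1)) ≤
      indepEval G (C ∪ D) x * pathEval x (c + d + 2) := by
  rw [indepEval_insert_mul_pathEval_le_iff hx hwC] at hC
  rw [indepEval_insert_mul_pathEval_le_iff hx hwD] at hD
  have hnonneighbors : nonneighborsIn G w (C ∪ D) =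
      nonneighborsIn G w C ∪ nonneighborsIn G w D := by grind [mem_nonneighborsIn]
  have hprod := mul_le_mul hC hD
    (mul_pos (h D subset_union_right) hd).le
    (mul_pos (h _ ((nonneighborsIn_subset).trans subset_union_left)) hc).le
  rw [indepEval_insert (by grind), hnonneighbors, indepEval_union hsep,
    indepEval_union (hsep.mono nonneighborsIn_subset nonneighborsIn_subset), pathEval_add]
  linarith [mul_le_mul_of_nonpos_left hprod hx.le]

lemma indepEval_insert_union_mul_lt [DecidableEq V] (hx : x < 0) (hwC : w ∉ C) (hwD : w ∉ D)
    (hsep : Separated G C D) (h : HereditarilyPos G x (insert w (C ∪ D))) {c d : ℕ}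
    (hp : ∀ k ≤ c + d + 2, 0 < pathEval x k)
    (hC : indepEval G (insert w C) x * pathEval x (c + 2) ≤ indepEval G C x * pathEval x (c + 3))
    (hD : indepEval G (insert w D) x * pathEval x (d + 2) ≤ indepEval G D x * pathEval x (d + 3)) :
    indepEval G (insert w (C ∪ D)) x * pathEval x (c + d + 3) <
      indepEval G (C ∪ D) x * pathEval x (c + d + 4) := by
  have hle := indepEval_insert_union_mul_le hx hwC hwD hsep (h.mono (subset_insert _ _))
    (hp (c + 2) (by omega)) (hp (d + 1) (by omega)) hC hD
  have hlt : pathEval x (c + d + 3) < pathEval x (c + 2) * pathEval x (d + 2) := by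
    rw [pathEval_add_three]
    linarith [mul_pos (sq_pos_of_neg hx) (mul_pos (hp c (by omega)) (hp d (by omega)))]
  calc _ < indepEval G (insert w (C ∪ D)) x * (pathEval x (c + 2) * pathEval x (d + 2)) :=
        mul_lt_mul_of_pos_left hlt h.self
    _ ≤ _ := by rwa [show c + d + 4 = c + 1 + (d + 1) + 2 by ring]

lemma ConnectedOn.nonneighborsIn_subset_erase [DecidableEq V]
    (hconn : ConnectedOn G (insert w A)) (hw : w ∉ A)
    (hA : A.Nonempty) : ∃ u ∈ A, nonneighborsIn G w A ⊆ A.erase u := by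
  obtain ⟨u, hu, v, hv, hvA, huv⟩ :=
    hconn.exists_boundary_edge (subset_insert w A) hA (by grind)
  exact ⟨u, hu, by grind [mem_nonneighborsIn, SimpleGraph.adj_comm]⟩

lemma ConnectedOn.exists_separated_insert [DecidableEq V]
    (hconn : ConnectedOn G (insert w A)) (hA : A.Nonempty)
    (hconnA : ¬ ConnectedOn G A) : ∃ C D, C.Nonempty ∧ D.Nonempty ∧ Separated G C D ∧
      C ∪ D = A ∧ ConnectedOn G (insert w C) ∧ ConnectedOn G (insert w D) := by
  obtain ⟨C, D, hC, hD, hsep, rfl⟩ := exists_separated_of_not_connectedOn hA hconnA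
  exact ⟨C, D, hC, hD, hsep, rfl, hconn.insert_of_insert_union hsep,
    (union_comm C D ▸ hconn).insert_of_insert_union hsep.symm⟩

lemma ConnectedOn.indepEval_insert_mul_pathEval_lt [DecidableEq V]
    (hconn : ConnectedOn G (insert w A))
    (hA : A.Nonempty) (hconnA : ¬ ConnectedOn G A) (hx : x < 0) (hw : w ∉ A)
    (h : HereditarilyPos G x (insert w A)) (hp : ∀ k ≤ #A, 0 < pathEval x k)
    (hparts : ∀ C ⊂ A, ConnectedOn G (insert w C) →
      indepEval G (insert w C) x * pathEval x (#C + 1) ≤ indepEval G C x * pathEval x (#C + 2)) :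
    indepEval G (insert w A) x * pathEval x (#A + 1) < indepEval G A x * pathEval x (#A + 2) := by
  obtain ⟨C, D, hC, hD, hsep, rfl, hconnC, hconnD⟩ := hconn.exists_separated_insert hA hconnA
  have hdisj := hsep.1
  have hpartC := hparts C (by grind [Finset.disjoint_left]) hconnC
  have hpartD := hparts D (by grind [Finset.disjoint_left]) hconnD
  have hcard := card_union_of_disjoint hdisj
  obtain ⟨c, hc⟩ := Nat.exists_eq_add_one.2 hC.card_pos
  obtain ⟨d, hd⟩ := Nat.exists_eq_add_one.2 hD.card_pos
  rw [hc] at hpartC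
  rw [hd] at hpartD
  rw [show #(C ∪ D) = c + d + 2 by omega] at hp ⊢
  exact indepEval_insert_union_mul_lt hx (by grind) (by grind) hsep h hp hpartC hpartD

/-- The inductive step compares the neighbourhood of `w` with a single neighbour if `A` is
connected; otherwise `w` separates two smaller connected sets and the inequality is strict. -/
lemma ConnectedOn.indepEval_insert_mul_pathEval_le [DecidableEq V]
    (hconn : ConnectedOn G (insert w A))
    (hx : x < 0) (hw : w ∉ A) (h : HereditarilyPos G x (insert w A))
    (hp : ∀ k ≤ #A + 1, 0 < pathEval x k) :
    indepEval G (insert w A) x * pathEval x (#A + 1) ≤ indepEval G A x * pathEval x (#A + 2) := by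
  induction hn : #A using Nat.strong_induction_on generalizing A w with
  | _ n ih =>
  subst hn
  rcases A.eq_empty_or_nonempty with rfl | hA
  · simp [pathEval_add_two, pathEval_zero, pathEval_one, indepEval_singleton, indepEval_empty]
  by_cases hconnA : ConnectedOn G A
  · obtain ⟨u, hu, hsub⟩ := hconn.nonneighborsIn_subset_erase hw hA
    have hcard := card_erase_add_one hu
    have hdel := ih #(A.erase u) (by omega) (by rwa [insert_erase hu]) (notMem_erase u A)
      (by rw [insert_erase hu]; exact h.mono (subset_insert w A)) (fun k hk => hp k (by omega)) rfl
    have hmono := (h.mono (subset_insert w A)).mono (erase_subset u A) |>.indepEval_le hx hsub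
    rw [insert_erase hu, show #(A.erase u) + 2 = #A + 1 by omega, hcard] at hdel
    rw [indepEval_insert_mul_pathEval_le_iff hx hw]
    exact hdel.trans (mul_le_mul_of_nonneg_right hmono (hp _ le_rfl).le)
  · refine (hconn.indepEval_insert_mul_pathEval_lt hA hconnA hx hw h (fun k hk => hp k (by omega))
      fun C hCA hconnC => ?_).le
    have hcard := card_lt_card hCA
    exact ih #C hcard hconnC (fun hwC => hw (hCA.1 hwC))
      (h.mono (insert_subset_insert w hCA.1)) (fun k hk => hp k (by omega)) rfl

lemma ConnectedOn.pathEval_pos (hconn : ConnectedOn G B) (hx : x < 0)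
    (h : HereditarilyPos G x B) {k : ℕ} (hk : k ≤ #B + 1) : 0 < pathEval x k := by
  classical
  induction hn : #B generalizing B k with
  | zero => exact absurd hn hconn.nonempty.card_pos.ne'
  | succ n ih =>
    have hp : ∀ k ≤ n + 1, 0 < pathEval x k := by
      intro k hk
      rcases Nat.eq_zero_or_pos n with rfl | hnpos
      · interval_cases k
        · exact zero_lt_one
        · exact zero_lt_one
      · obtain ⟨w, hw, hconnw⟩ := hconn.exists_erase (by omega)
        have hcard := card_erase_add_one hw
        exact ih hconnw (h.mono (erase_subset w B)) (by omega) (by omega)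
    rcases Nat.lt_or_ge k (n + 2) with hlt | hge
    · exact hp k (by omega)
    obtain ⟨w, hw⟩ := hconn.nonempty
    have hcard : #(B.erase w) = n := by rw [card_erase_of_mem hw]; omega
    have hdel := ConnectedOn.indepEval_insert_mul_pathEval_le (by rwa [insert_erase hw]) hx
      (notMem_erase w B) (by rwa [insert_erase hw]) (by rwa [hcard])
    rw [insert_erase hw, hcard] at hdel
    rw [show k = n + 2 by omega]
    exact pos_of_mul_pos_right ((mul_pos h.self (hp _ le_rfl)).trans_le hdel)
      (h _ (erase_subset w B)).le

lemma ConnectedOn.indepEval_mul_pathEval_le [DecidableEq V] (hconn : ConnectedOn G B) (hx : x < 0)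
    (h : HereditarilyPos G x B) (hw : w ∈ B) :
    indepEval G B x * pathEval x #B ≤ indepEval G (B.erase w) x * pathEval x (#B + 1) := by
  have hcard := card_erase_add_one hw
  have hdel := ConnectedOn.indepEval_insert_mul_pathEval_le (by rwa [insert_erase hw]) hx
    (notMem_erase w B) (by rwa [insert_erase hw])
    (fun k hk => hconn.pathEval_pos hx h (by omega))
  rwa [insert_erase hw, show #(B.erase w) + 2 = #B + 1 by omega, hcard] at hdel

lemma IsInducedPath.exists_insert [DecidableEq V]
    {f : ℕ → V} {N : ℕ} (hf : IsInducedPath G f N) (hN : 0 < N)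
    (hw : w ∉ (range N).image f)
    (hadj : nonneighborsIn G w ((range N).image f) = ((range N).image f).erase (f 0)) :
    ∃ g, g 0 = w ∧ insert w ((range N).image f) = (range (N + 1)).image g ∧
      IsInducedPath G g (N + 1) := by
  have hmem : ∀ i < N, f i ∈ (range N).image f := fun i hi => mem_image_of_mem f (mem_range.2 hi)
  refine ⟨fun i => if i = 0 then w else f (i - 1), rfl, ?_, hf.cons (by grind) fun i hi => ?_⟩
  · rw [range_add_one', image_insert, map_eq_image, image_image]
    rfl
  · have hinj := (hf i hi 0 hN).1
    have hiff := congrArg (f i ∈ ·) hadj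
    grind [mem_nonneighborsIn]

lemma ConnectedOn.exists_isInducedPath_of_mul_eq [DecidableEq V]
    (hconn : ConnectedOn G B) (hx : x < 0)
    (h : HereditarilyPos G x B) (hw : w ∈ B)
    (heq : indepEval G B x * pathEval x #B = indepEval G (B.erase w) x * pathEval x (#B + 1)) :
    ∃ f, f 0 = w ∧ B = (range #B).image f ∧ IsInducedPath G f #B := by
  induction hn : #B generalizing B w with
  | zero => exact absurd hn hconn.nonempty.card_pos.ne'
  | succ n ih =>
    obtain ⟨A, hwA, rfl⟩ : ∃ A, w ∉ A ∧ insert w A = B :=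
      ⟨B.erase w, notMem_erase w B, insert_erase hw⟩
    rw [erase_insert hwA, card_insert_of_notMem hwA] at heq
    have hcard : #A = n := by rw [card_insert_of_notMem hwA] at hn; omega
    have hp : ∀ k ≤ #A + 1, 0 < pathEval x k := fun k hk => hconn.pathEval_pos hx h (by omega)
    rcases A.eq_empty_or_nonempty with rfl | hA
    · subst hcard
      exact ⟨fun _ => w, rfl, by simp, .singleton w⟩
    by_cases hconnA : ConnectedOn G A
    · obtain ⟨u, hu, hsub⟩ := hconn.nonneighborsIn_subset_erase hwA hA
      have hposA := h.mono (subset_insert w A)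
      have hdel := hconnA.indepEval_mul_pathEval_le hx hposA hu
      rw [indepEval_insert_mul_pathEval_eq_iff hx hwA] at heq
      have hnonneighbors : nonneighborsIn G w A = A.erase u := by
        by_contra hne
        have hlt := (hposA.mono (erase_subset u A)).indepEval_lt hx (hsub.ssubset_of_ne hne)
        linarith [mul_lt_mul_of_pos_right hlt (hp _ le_rfl)]
      obtain ⟨f, hf0, hAf, hf⟩ := ih hconnA hposA hu (by rw [heq, hnonneighbors]) hcard
      subst hAf hf0
      exact hf.exists_insert (by have := hA.card_pos; omega) hwA hnonneighbors
    · refine absurd heq (hconn.indepEval_insert_mul_pathEval_lt hA hconnA hx hwA h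
        (fun k hk => hp k (by omega)) fun C hCA hconnC => ?_).ne
      have := card_lt_card hCA
      exact hconnC.indepEval_insert_mul_pathEval_le hx (fun hwC => hwA (hCA.1 hwC))
        (h.mono (insert_subset_insert w hCA.1)) fun k hk => hp k (by omega)

lemma ConnectedOn.indepEval_le_pathEval_of_erase [DecidableEq V]
    (hconn : ConnectedOn G B) (hx : x < 0)
    (h : HereditarilyPos G x B) (hw : w ∈ B) (hle : indepEval G (B.erase w) x ≤ pathEval x #B) :
    indepEval G B x ≤ pathEval x (#B + 1) := by
  refine le_of_mul_le_mul_right ?_ (hconn.pathEval_pos hx h (Nat.le_succ #B))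
  calc indepEval G B x * pathEval x #B
      ≤ indepEval G (B.erase w) x * pathEval x (#B + 1) := hconn.indepEval_mul_pathEval_le hx h hw
    _ ≤ pathEval x #B * pathEval x (#B + 1) :=
        mul_le_mul_of_nonneg_right hle (hconn.pathEval_pos hx h le_rfl).le
    _ = pathEval x (#B + 1) * pathEval x #B := mul_comm _ _

lemma ConnectedOn.exists_indepEval_erase_le [DecidableEq V] (hconn : ConnectedOn G B) (hx : x < 0)
    (h : HereditarilyPos G x B) : ∃ w ∈ B, indepEval G (B.erase w) x ≤ pathEval x #B := by
  induction hn : #B generalizing B with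
  | zero => exact absurd hn hconn.nonempty.card_pos.ne'
  | succ n ih =>
    rcases Nat.lt_or_ge 1 #B with hcard | hcard
    · obtain ⟨w, hw, hconnw⟩ := hconn.exists_erase hcard
      have hcardw : #(B.erase w) = n := by rw [card_erase_of_mem hw]; omega
      have hposw := h.mono (erase_subset w B)
      obtain ⟨v, hv, hle⟩ := ih hconnw hposw hcardw
      have := hconnw.indepEval_le_pathEval_of_erase hx hposw hv (by rwa [hcardw])
      exact ⟨w, hw, by rwa [hcardw] at this⟩
    · obtain ⟨w, rfl⟩ := card_eq_one.1 (hcard.antisymm hconn.nonempty.card_pos)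
      rw [← hn]
      exact ⟨w, mem_singleton_self w, by simp [indepEval_empty, pathEval_one]⟩

lemma ConnectedOn.indepEval_le_pathEval (hconn : ConnectedOn G B) (hx : x < 0)
    (h : HereditarilyPos G x B) : indepEval G B x ≤ pathEval x (#B + 1) := by
  classical
  obtain ⟨w, hw, hle⟩ := hconn.exists_indepEval_erase_le hx h
  exact hconn.indepEval_le_pathEval_of_erase hx h hw hle

lemma ConnectedOn.exists_isInducedPath_of_eq [DecidableEq V] (hconn : ConnectedOn G B) (hx : x < 0)
    (h : HereditarilyPos G x B) (heq : indepEval G B x = pathEval x (#B + 1)) :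
    ∃ f, B = (range #B).image f ∧ IsInducedPath G f #B := by
  obtain ⟨w, hw, hle⟩ := hconn.exists_indepEval_erase_le hx h
  have hge := hconn.indepEval_mul_pathEval_le hx h hw
  obtain ⟨f, -, hf⟩ := hconn.exists_isInducedPath_of_mul_eq hx h hw (hge.antisymm (by
    rw [heq, mul_comm]
    exact mul_le_mul_of_nonneg_left hle (hconn.pathEval_pos hx h le_rfl).le))
  exact ⟨f, hf⟩

lemma ConnectedOn.indepEval_mul_le_of_separated [DecidableEq V]
    (hB : ConnectedOn G (insert w (C ∪ D))) (hx : x < 0)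
    (h : HereditarilyPos G x (insert w (C ∪ D))) (hwC : w ∉ C) (hwD : w ∉ D)
    (hsep : Separated G C D) :
    indepEval G (insert w (C ∪ D)) x * (pathEval x (#C + 1) * pathEval x (#D + 1)) ≤
      indepEval G C x * indepEval G D x * pathEval x (#C + #D + 2) := by
  have hp : ∀ k ≤ #C + #D + 2, 0 < pathEval x k := fun k hk => hB.pathEval_pos hx h (by
    rwa [card_insert_of_notMem (by grind), card_union_of_disjoint hsep.1])
  have hdelC := (hB.insert_of_insert_union hsep).indepEval_insert_mul_pathEval_le hx hwC
    (h.mono (by grind)) fun k hk => hp k (by omega)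
  have hdelD := (ConnectedOn.insert_of_insert_union (union_comm C D ▸ hB)
    hsep.symm).indepEval_insert_mul_pathEval_le hx hwD (h.mono (by grind))
    fun k hk => hp k (by omega)
  rw [← indepEval_union hsep]
  exact indepEval_insert_union_mul_le hx hwC hwD hsep (h.mono (subset_insert _ _))
    (hp _ (by omega)) (hp _ (by omega)) hdelC hdelD

lemma ConnectedOn.indepEval_mul_le_of_subset_component [DecidableEq V]
    (hB : ConnectedOn G (insert w (C ∪ D))) (hx : x < 0)
    (h : HereditarilyPos G x (insert w (C ∪ D))) (hwC : w ∉ C) (hwD : w ∉ D)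
    (hsep : Separated G C D) (hSC : S ⊆ C)
    (hC : indepEval G C x * pathEval x (#S + 1) ≤ indepEval G S x * pathEval x (#C + 1)) :
    indepEval G (insert w (C ∪ D)) x * pathEval x (#S + #D + 1) ≤
      indepEval G S x * indepEval G D x * pathEval x (#C + #D + 2) := by
  have hcard := card_le_card hSC
  have hp : ∀ k ≤ #C + #D + 2, 0 < pathEval x k := fun k hk => hB.pathEval_pos hx h (by
    rwa [card_insert_of_notMem (by grind), card_union_of_disjoint hsep.1])
  have hsplit := hB.indepEval_mul_le_of_separated hx h hwC hwD hsep
  have hmul := pathEval_add_le_mul (a := #S) (b := #D) fun k hk => hp k (by omega)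
  have hpS := hp (#S + 1) (by omega)
  have hpB := hp (#C + #D + 2) le_rfl
  have hpC := hp (#C + 1) (by omega)
  have hIB := h.self
  have hID := h D (by grind)
  generalize insert w (C ∪ D) = B at *
  refine le_of_mul_le_mul_right ?_ hpC
  calc indepEval G B x * pathEval x (#S + #D + 1) * pathEval x (#C + 1)
      ≤ indepEval G B x * (pathEval x (#S + 1) * pathEval x (#D + 1)) * pathEval x (#C + 1) := by
        gcongr
    _ = indepEval G B x * (pathEval x (#C + 1) * pathEval x (#D + 1)) * pathEval x (#S + 1) := by
        ring
    _ ≤ indepEval G C x * indepEval G D x * pathEval x (#C + #D + 2) * pathEval x (#S + 1) := by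
        gcongr
    _ = indepEval G C x * pathEval x (#S + 1) * (indepEval G D x * pathEval x (#C + #D + 2)) := by
        ring
    _ ≤ indepEval G S x * pathEval x (#C + 1) * (indepEval G D x * pathEval x (#C + #D + 2)) := by
        gcongr
    _ = indepEval G S x * indepEval G D x * pathEval x (#C + #D + 2) * pathEval x (#C + 1) := by
        ring

/-- The induction deletes from `B` a vertex `v ∉ S` for which all other vertices outside `S` lie in
one component of `B - v`. -/
lemma ConnectedOn.indepEval_mul_pathEval_le_of_subset (hconn : ConnectedOn G B) (hx : x < 0)
    (h : HereditarilyPos G x B) (hSB : S ⊆ B) :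
    indepEval G B x * pathEval x (#S + 1) ≤ indepEval G S x * pathEval x (#B + 1) := by
  classical
  induction hn : #B using Nat.strong_induction_on generalizing B S with
  | _ n ih =>
  subst hn
  rcases hSB.eq_or_ssubset with rfl | hssub
  · exact le_rfl
  rcases Nat.lt_or_ge 1 #B with hcard | hcard
  swap
  · obtain rfl : S = ∅ := card_eq_zero.1 (by have := card_lt_card hssub; omega)
    simpa [indepEval_empty, pathEval_one] using hconn.indepEval_le_pathEval hx h
  obtain ⟨v, hv, C, hCB, hconnC, hsep, hrest⟩ :=
    hconn.exists_component_erase hcard sdiff_subset (sdiff_nonempty.2 hssub.2)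
  generalize hD : B.erase v \ C = D at hsep
  obtain rfl : insert v (C ∪ D) = B := by grind
  have hS : S ∩ C ∪ D = S := by grind
  have hsepS : Separated G (S ∩ C) D := hsep.mono inter_subset_right subset_rfl
  have hcardB : #(insert v (C ∪ D)) = #C + #D + 1 := by
    rw [card_insert_of_notMem (by grind), card_union_of_disjoint hsep.1]
  have hC := ih #C (by omega) hconnC (h.mono (by grind)) (S := S ∩ C) inter_subset_right rfl
  have hB := hconn.indepEval_mul_le_of_subset_component hx h (by grind) (by grind) hsep
    inter_subset_right hC
  rwa [← indepEval_union hsepS, ← card_union_of_disjoint hsepS.1, hS, ← Nat.add_assoc _ 1 1,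
    ← hcardB] at hB

end DeletionRatio

section Cycles

open Finset

variable {n : ℕ} {x : ℝ}

lemma cycleGraph_adj_iff_val (hn : 3 ≤ n) (u v : Fin n) : (cycleGraph n).Adj u v ↔
    u.val + 1 = v.val ∨ v.val + 1 = u.val ∨ (u.val = 0 ∧ v.val + 1 = n) ∨
      (v.val = 0 ∧ u.val + 1 = n) := by
  rw [cycleGraph_adj']
  have hu := u.isLt
  have hv := v.isLt
  rcases lt_trichotomy u v with h | rfl | h
  · rw [Fin.sub_val_of_le h.le, Fin.coe_sub_iff_lt.2 h]
    have : u.val < v.val := h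
    omega
  · rw [Fin.sub_val_of_le le_rfl]
    omega
  · rw [Fin.sub_val_of_le h.le, Fin.coe_sub_iff_lt.2 h]
    have : v.val < u.val := h
    omega

lemma isInducedPath_cycleGraph {s N : ℕ} (hs : 0 < s) (hN : s + N ≤ n + 3) :
    IsInducedPath (cycleGraph (n + 3)) (fun i => Fin.ofNat (n + 3) (i + s)) N := by
  intro i hi j hj
  rw [cycleGraph_adj_iff_val (by omega), Fin.ext_iff, Fin.val_ofNat, Fin.val_ofNat,
    Nat.mod_eq_of_lt (by omega), Nat.mod_eq_of_lt (by omega)]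
  omega

lemma indepEval_cycleGraph (n : ℕ) : indepEval (cycleGraph (n + 3)) univ x =
    pathEval x (n + 4) - x ^ 2 * pathEval x n := by
  have herase : (univ.erase 0 : Finset (Fin (n + 3))) =
      (range (n + 2)).image fun i => Fin.ofNat (n + 3) (i + 1) := by
    ext z
    have hz := z.isLt
    simp only [mem_erase, mem_univ, and_true, mem_image, mem_range, ne_eq, Fin.ext_iff,
      Fin.val_zero, Fin.val_ofNat]
    refine ⟨fun h => ⟨z.val - 1, by omega, ?_⟩, ?_⟩
    · rw [Nat.mod_eq_of_lt] <;> omega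
    · rintro ⟨i, hi, h⟩
      rw [Nat.mod_eq_of_lt (by omega)] at h
      omega
  have hnonneighbors : nonneighborsIn (cycleGraph (n + 3)) 0 (univ.erase 0) =
      (range n).image fun i => Fin.ofNat (n + 3) (i + 2) := by
    ext z
    have hz := z.isLt
    have hadj : (cycleGraph (n + 3)).Adj 0 z ↔ z.val = 1 ∨ z.val = n + 2 := by
      rw [cycleGraph_adj_iff_val (by omega), Fin.val_zero]
      omega
    simp only [mem_nonneighborsIn, hadj, mem_erase, mem_univ, and_true, mem_image, mem_range, ne_eq,
      Fin.ext_iff, Fin.val_zero, Fin.val_ofNat]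
    refine ⟨fun h => ⟨z.val - 2, by omega, ?_⟩, ?_⟩
    · rw [Nat.mod_eq_of_lt] <;> omega
    · rintro ⟨i, hi, h⟩
      rw [Nat.mod_eq_of_lt (by omega)] at h
      omega
  rw [indepEval_erase (mem_univ 0), hnonneighbors, herase,
    (isInducedPath_cycleGraph one_pos (by omega)).indepEval_image,
    (isInducedPath_cycleGraph two_pos (by omega)).indepEval_image, pathEval_add_two (n + 2),
    pathEval_add_two n]
  ring

variable {V : Type*} {G : SimpleGraph V} {f : ℕ → V} {i j : ℕ} {a b : V}

/-- `f` runs through the vertices `f 0, …, f (n - 1)` of a path of `G`, whose only other adjacency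
is the chord joining `f i` and `f j`. -/
def IsPathWithChord {V : Type*} (G : SimpleGraph V) (f : ℕ → V) (n i j : ℕ) : Prop :=
  ∀ k < n, ∀ l < n, (f k = f l → k = l) ∧ (G.Adj (f k) (f l) ↔
    k + 1 = l ∨ l + 1 = k ∨ (k = i ∧ l = j) ∨ (k = j ∧ l = i))

lemma IsInducedPath.isPathWithChord (hf : IsInducedPath (G.deleteEdges {s(f i, f j)}) f n)
    (hij : G.Adj (f i) (f j)) (hi : i < n) (hj : j < n) : IsPathWithChord G f n i j := by
  intro k hk l hl
  refine ⟨(hf k hk l hl).1, ?_⟩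
  have hadj := (hf k hk l hl).2
  have hki := (hf k hk i hi).1
  have hkj := (hf k hk j hj).1
  have hli := (hf l hl i hi).1
  have hlj := (hf l hl j hj).1
  simp only [deleteEdges_adj, Set.mem_singleton_iff, Sym2.eq_iff] at hadj
  grind [SimpleGraph.adj_comm]

namespace IsPathWithChord

lemma reverse (hf : IsPathWithChord G f n i j) (hi : i < n) (hj : j < n) :
    IsPathWithChord G (fun k => f (n - 1 - k)) n (n - 1 - j) (n - 1 - i) := by
  intro k hk l hl
  have := hf (n - 1 - k) (by omega) (n - 1 - l) (by omega)
  exact ⟨fun h => by have := this.1 h; omega, this.2.trans (by omega)⟩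

lemma injective (hf : IsPathWithChord G f n i j) : Function.Injective fun k : Fin n => f k :=
  fun k l h => Fin.ext ((hf k k.isLt l l.isLt).1 h)

end IsPathWithChord

variable [Fintype V]

lemma nonempty_iso_of_injective (hcard : Fintype.card V = n) {g : Fin n → V}
    (hg : Function.Injective g) {K : SimpleGraph (Fin n)}
    (hadj : ∀ k l, G.Adj (g k) (g l) ↔ K.Adj k l) : Nonempty (G ≃g K) := by
  have hbij : Function.Bijective g :=
    (Fintype.bijective_iff_injective_and_card g).2 ⟨hg, by simp [hcard]⟩
  exact ⟨(⟨Equiv.ofBijective g hbij, hadj _ _⟩ : K ≃g G).symm⟩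

namespace IsPathWithChord

lemma nonempty_iso_cycleGraph (hf : IsPathWithChord G f n 0 (n - 1)) (hn : 3 ≤ n)
    (hcard : Fintype.card V = n) : Nonempty (G ≃g cycleGraph n) := by
  refine nonempty_iso_of_injective hcard hf.injective fun k l => ?_
  rw [cycleGraph_adj_iff_val hn, (hf k k.isLt l l.isLt).2]
  omega

lemma nonempty_iso_dgraph (hf : IsPathWithChord G f n 0 2) (hcard : Fintype.card V = n) :
    Nonempty (G ≃g Dgraph n) := by
  refine nonempty_iso_of_injective hcard hf.injective fun k l => ?_
  rw [(hf k k.isLt l l.isLt).2, Dgraph, fromRel_adj, ne_eq, Fin.ext_iff]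
  omega

lemma le_card_union_neighborsIn [DecidableEq V] (hf : IsPathWithChord G f n i j) (hi : i < n)
    (hj : j < n) {T : Finset ℕ} (hT : ∀ k ∈ T, k < n ∧
      (k + 1 = i ∨ k = i ∨ k = i + 1 ∨ k + 1 = j ∨ k = j ∨ k = j + 1)) :
    #T ≤ #(neighborsIn G (f i) univ ∪ neighborsIn G (f j) univ) := by
  refine card_le_card_of_injOn f (fun k hk => ?_) fun k hk l hl =>
    (hf k (hT k hk).1 l (hT l hl).1).1
  simp only [mem_coe, mem_union, mem_neighborsIn, mem_univ, true_and,
    (hf i hi k (hT k hk).1).2, (hf j hj k (hT k hk).1).2]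
  have := (hT k hk).2
  omega

lemma five_le_card_union_neighborsIn [DecidableEq V] (hf : IsPathWithChord G f n i j)
    (hij : i + 2 ≤ j) (hj : j < n) (hcard : Fintype.card V = n)
    (hC : ¬ Nonempty (G ≃g cycleGraph n)) (hD : ¬ Nonempty (G ≃g Dgraph n)) :
    5 ≤ #(neighborsIn G (f i) univ ∪ neighborsIn G (f j) univ) := by
  have hcycle : ¬ (i = 0 ∧ j = n - 1) := by
    rintro ⟨rfl, rfl⟩
    exact hC (hf.nonempty_iso_cycleGraph (by omega) hcard)
  have hstart : ¬ (i = 0 ∧ j = 2) := by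
    rintro ⟨rfl, rfl⟩
    exact hD (hf.nonempty_iso_dgraph hcard)
  have hend : ¬ (n - 1 - j = 0 ∧ n - 1 - i = 2) := fun h =>
    hD (nonempty_iso_dgraph (h.1 ▸ h.2 ▸ hf.reverse (by omega) hj) hcard)
  have hIcc : ∀ p q r s : ℕ, q < r → #(Icc p q ∪ Icc r s) = q + 1 - p + (s + 1 - r) := by
    intro p q r s hqr
    rw [card_union_of_disjoint, Nat.card_Icc, Nat.card_Icc]
    exact Finset.disjoint_left.2 fun k hk hk' => by simp only [mem_Icc] at hk hk'; omega
  obtain ⟨T, hT, hcardT⟩ : ∃ T : Finset ℕ, (∀ k ∈ T, k < n ∧ (k + 1 = i ∨ k = i ∨ k = i + 1 ∨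
      k + 1 = j ∨ k = j ∨ k = j + 1)) ∧ 5 ≤ #T := by
    by_cases hi0 : i = 0
    · refine ⟨Icc 0 1 ∪ Icc (j - 1) (j + 1), fun k => ?_, ?_⟩
      · simp only [mem_union, mem_Icc]
        omega
      · rw [hIcc] <;> omega
    by_cases hjn : j + 1 = n
    · refine ⟨Icc (i - 1) (i + 1) ∪ Icc (j - 1) j, fun k => ?_, ?_⟩
      · simp only [mem_union, mem_Icc]
        omega
      · rw [hIcc] <;> omega
    · refine ⟨Icc (i - 1) (i + 1) ∪ Icc j (j + 1), fun k => ?_, ?_⟩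
      · simp only [mem_union, mem_Icc]
        omega
      · rw [hIcc] <;> omega
  exact hcardT.trans (hf.le_card_union_neighborsIn (by omega) hj hT)

end IsPathWithChord

lemma IsInducedPath.five_le_card_union_neighborsIn [DecidableEq V] (hab : G.Adj a b)
    (hf : IsInducedPath (G.deleteEdges {s(a, b)}) f n) (hrange : univ = (range n).image f)
    (hcard : Fintype.card V = n) (hC : ¬ Nonempty (G ≃g cycleGraph n))
    (hD : ¬ Nonempty (G ≃g Dgraph n)) :
    5 ≤ #(neighborsIn G a univ ∪ neighborsIn G b univ) := by
  have hsurj : ∀ z, ∃ i < n, f i = z := fun z => by simpa [hrange] using mem_univ z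
  obtain ⟨i, hi, rfl⟩ := hsurj a
  obtain ⟨j, hj, rfl⟩ := hsurj b
  have hij : i + 2 ≤ j ∨ j + 2 ≤ i := by
    have hne : i ≠ j := by rintro rfl; exact hab.ne rfl
    have hnot : ¬ (i + 1 = j ∨ j + 1 = i) := by simp [← (hf i hi j hj).2, deleteEdges_adj]
    omega
  rcases hij with hij | hij
  · exact (hf.isPathWithChord hab hi hj).five_le_card_union_neighborsIn hij hj hcard hC hD
  · rw [Sym2.eq_swap] at hf
    rw [union_comm]
    exact (hf.isPathWithChord hab.symm hj hi).five_le_card_union_neighborsIn hij hi hcard hC hD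

end Cycles

section CycleComparison

open Finset

variable {V : Type*} {G : SimpleGraph V} {a b c : V} {n : ℕ} {x : ℝ}

/-- Eliminating `R` from `J = I + t R` leaves `I P ≤ J (P - t q)`, and then `J ≤ P`. -/
lemma lt_sub_mul_of_mul_le_mul {I J P R q q₀ t : ℝ} (hI : 0 < I) (hJ : 0 < J) (ht : 0 < t)
    (hIJ : J = I + t * R) (hJP : J ≤ P) (hmul : J * q ≤ R * P) (hq : q₀ ≤ q)
    (hlt : J = P → q₀ < q) : I < P - t * q₀ := by
  have hP : 0 < P := hJ.trans_le hJP
  have hIP : I * P ≤ J * (P - t * q) := by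
    rw [eq_sub_of_add_eq hIJ.symm]
    linarith [mul_le_mul_of_nonneg_left hmul ht.le]
  have hpos : 0 < P - t * q := pos_of_mul_pos_right ((mul_pos hI hP).trans_le hIP) hJ.le
  have htq := mul_le_mul_of_nonneg_left hq ht.le
  rcases hJP.eq_or_lt with heq | hJP
  · have hI_le : I ≤ P - t * q := le_of_mul_le_mul_left (by rwa [heq, mul_comm I P] at hIP) hP
    linarith [mul_lt_mul_of_pos_left (hlt heq) ht]
  · have hI_lt : I * P < (P - t * q) * P := by
      linarith [mul_lt_mul_of_pos_right hJP hpos]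
    linarith [lt_of_mul_lt_mul_right hI_lt hP.le]

lemma exists_adj_ne_of_not_isBridge (hab : G.Adj a b) (h : ¬ G.IsBridge s(a, b)) :
    ∃ c, G.Adj a c ∧ c ≠ b := by
  obtain ⟨p⟩ := not_not.1 h
  cases p with
  | nil => exact absurd rfl hab.ne
  | cons hadj _ =>
    rw [deleteEdges_adj] at hadj
    exact ⟨_, hadj.1, fun hcb => hadj.2 (by rw [hcb]; rfl)⟩

lemma not_isBridge_of_common_adj (hac : G.Adj a c) (hbc : G.Adj b c) :
    ¬ G.IsBridge s(a, b) := by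
  have hadj : ∀ u, G.Adj u c → (G.deleteEdges {s(a, b)}).Adj u c := fun u huc => by
    rw [deleteEdges_adj, Set.mem_singleton_iff, Sym2.eq_iff]
    grind [hac.ne, hbc.ne]
  rw [isBridge_iff, not_not]
  exact (hadj a hac).reachable.trans (hadj b hbc).symm.reachable

variable [Fintype V]

lemma card_nonneighborsIn_nonneighborsIn_add [DecidableEq V] :
    #(nonneighborsIn G b (nonneighborsIn G a univ)) +
      #(neighborsIn G a univ ∪ neighborsIn G b univ) = Fintype.card V := by
  rw [← card_univ, ← card_sdiff_add_card_eq_card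
    (subset_univ (neighborsIn G a univ ∪ neighborsIn G b univ))]
  congr 2
  ext z
  simp

lemma indepEval_lt_cycleGraph_of_edge [DecidableEq V] (hcard : Fintype.card V = n)
    (hab : G.Adj a b) (hconn : (G.deleteEdges {s(a, b)}).Connected)
    (hM : 4 ≤ #(neighborsIn G a univ ∪ neighborsIn G b univ))
    (hC : ¬ Nonempty (G ≃g cycleGraph n)) (hD : ¬ Nonempty (G ≃g Dgraph n)) (hx : x < 0)
    (hpos : HereditarilyPos G x univ) :
    indepEval G univ x < indepEval (cycleGraph n) univ x := by
  set T := nonneighborsIn G b (nonneighborsIn G a univ) with hT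
  have hcardT : #T + #(neighborsIn G a univ ∪ neighborsIn G b univ) = n :=
    hcard ▸ card_nonneighborsIn_nonneighborsIn_add
  obtain ⟨m, rfl⟩ : ∃ m, n = m + 1 + 3 := ⟨n - 4, by omega⟩
  set H := G.deleteEdges {s(a, b)} with hH
  have hH_conn : ConnectedOn H univ := connectedOn_univ.2 hconn
  have hH_pos : HereditarilyPos H x univ := hpos.deleteEdges_singleton hab
  have hH_T : indepEval H T x = indepEval G T x := indepEval_congr fun u hu w hw => by
    simp only [hH, hT, deleteEdges_adj, mem_nonneighborsIn, Set.mem_singleton_iff] at *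
    grind [SimpleGraph.adj_comm]
  have hJP := hH_conn.indepEval_le_pathEval hx hH_pos
  have hmul := hH_conn.indepEval_mul_pathEval_le_of_subset hx hH_pos (subset_univ T)
  have hp := fun k => hH_conn.pathEval_pos hx hH_pos (k := k)
  rw [card_univ, hcard] at hJP hmul hp
  rw [indepEval_cycleGraph]
  refine lt_sub_mul_of_mul_le_mul hpos.self hH_pos.self (even_two.pow_pos hx.ne)
    (indepEval_deleteEdges_singleton hab (mem_univ a) (mem_univ b)) hJP (hH_T ▸ hmul) ?_
    fun heq => ?_
  · rcases (show #T ≤ m by omega).eq_or_lt with h | h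
    · rw [h]
    · exact (pathEval_lt hx (fun k hk => hp k (by omega)) h).le
  · obtain ⟨f, hrange, hf⟩ := hH_conn.exists_isInducedPath_of_eq hx hH_pos (by
      rw [card_univ, hcard, heq])
    rw [card_univ, hcard] at hrange hf
    have hfive := hf.five_le_card_union_neighborsIn hab hrange hcard hC hD
    exact pathEval_lt hx (fun k hk => hp k (by omega)) (by omega)

lemma four_le_card_union_neighborsIn [DecidableEq V] {d : V} (hab : G.Adj a b) (hac : G.Adj a c)
    (hcb : c ≠ b) (hd : G.Adj a d ∨ G.Adj b d) (hda : d ≠ a) (hdb : d ≠ b) (hdc : d ≠ c) :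
    4 ≤ #(neighborsIn G a univ ∪ neighborsIn G b univ) := by
  refine three_lt_card.2 ⟨a, ?_, b, ?_, c, ?_, d, ?_, hab.ne, hac.ne, hda.symm, hcb.symm, hdb.symm,
    hdc.symm⟩ <;> simp [hab, hac, hd, hab.symm]

lemma exists_common_adj_or_four_le_card_union_neighborsIn [DecidableEq V] (hab : G.Adj a b)
    (h : ¬ G.IsBridge s(a, b)) : (∃ c, G.Adj a c ∧ G.Adj b c) ∨
      4 ≤ #(neighborsIn G a univ ∪ neighborsIn G b univ) := by
  obtain ⟨c, hac, hcb⟩ := exists_adj_ne_of_not_isBridge hab h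
  obtain ⟨d, hbd, hda⟩ := exists_adj_ne_of_not_isBridge hab.symm (by rwa [Sym2.eq_swap])
  rcases eq_or_ne d c with rfl | hdc
  · exact Or.inl ⟨d, hac, hbd⟩
  · exact Or.inr (four_le_card_union_neighborsIn hab hac hcb (Or.inr hbd) hda hbd.ne' hdc)

lemma exists_four_le_card_union_neighborsIn_of_triangle [DecidableEq V] (hG : G.Connected)
    (hcard : 4 ≤ Fintype.card V) (hab : G.Adj a b) (hac : G.Adj a c) (hbc : G.Adj b c) :
    ∃ u v, G.Adj u v ∧ ¬ G.IsBridge s(u, v) ∧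
      4 ≤ #(neighborsIn G u univ ∪ neighborsIn G v univ) := by
  have hne : ({a, b, c} : Finset V) ≠ univ := fun h => by
    have hle := card_le_three (a := a) (b := b) (c := c)
    rw [h, card_univ] at hle
    omega
  obtain ⟨u, hu, d, -, hd, hud⟩ := (connectedOn_univ.2 hG).exists_boundary_edge (subset_univ _)
    (insert_nonempty a {b, c}) hne
  simp only [mem_insert, mem_singleton, not_or] at hu hd
  obtain ⟨hda, hdb, hdc⟩ := hd
  rcases hu with rfl | rfl | rfl
  · exact ⟨u, b, hab, not_isBridge_of_common_adj hac hbc, four_le_card_union_neighborsIn hab hac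
      hbc.ne' (Or.inl hud) hda hdb hdc⟩
  · exact ⟨a, u, hab, not_isBridge_of_common_adj hac hbc, four_le_card_union_neighborsIn hab hac
      hbc.ne' (Or.inr hud) hda hdb hdc⟩
  · exact ⟨a, u, hac, not_isBridge_of_common_adj hab hbc.symm, four_le_card_union_neighborsIn hac
      hab hbc.ne (Or.inr hud) hda hdc hdb⟩

lemma nonempty_iso_cycleGraph_three (hcard : Fintype.card V = 3) (hab : G.Adj a b)
    (hac : G.Adj a c) (hbc : G.Adj b c) : Nonempty (G ≃g cycleGraph 3) := by
  classical
  have huniv : ({a, b, c} : Finset V) = univ := eq_univ_of_card _ <| by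
    rw [hcard, card_eq_three]
    exact ⟨a, b, c, hab.ne, hac.ne, hbc.ne, rfl⟩
  have htop : G = ⊤ := by
    ext u v
    have hu := mem_univ u
    have hv := mem_univ v
    rw [← huniv, mem_insert, mem_insert, mem_singleton] at hu hv
    rw [top_adj]
    refine ⟨fun h => h.ne, fun h => ?_⟩
    grind [SimpleGraph.adj_comm]
  rw [htop, cycleGraph_three_eq_top]
  exact ⟨Iso.completeGraph (Fintype.equivFinOfCardEq hcard)⟩

theorem indepEval_lt_cycleGraph (hG : G.Connected) (hcyc : ¬ G.IsAcyclic)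
    (hcard : Fintype.card V = n) (hC : ¬ Nonempty (G ≃g cycleGraph n))
    (hD : 4 ≤ n → ¬ Nonempty (G ≃g Dgraph n)) (hx : x < 0) (hpos : HereditarilyPos G x univ) :
    indepEval G univ x < indepEval (cycleGraph n) univ x := by
  classical
  suffices h : ∃ u v, G.Adj u v ∧ ¬ G.IsBridge s(u, v) ∧
      4 ≤ #(neighborsIn G u univ ∪ neighborsIn G v univ) by
    obtain ⟨u, v, huv, hbridge, hM⟩ := h
    have hn : 4 ≤ n := hcard ▸ hM.trans (card_le_univ _)
    exact indepEval_lt_cycleGraph_of_edge hcard huv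
      (hG.connected_delete_edge_of_not_isBridge hbridge) hM hC (hD hn) hx hpos
  rw [isAcyclic_iff_forall_adj_isBridge] at hcyc
  push Not at hcyc
  obtain ⟨a, b, hab, hbridge⟩ := hcyc
  rcases exists_common_adj_or_four_le_card_union_neighborsIn hab hbridge with ⟨c, hac, hbc⟩ | hM
  · refine exists_four_le_card_union_neighborsIn_of_triangle hG ?_ hab hac hbc
    have hthree : 3 ≤ Fintype.card V := two_lt_card.2
      ⟨a, mem_univ a, b, mem_univ b, c, mem_univ c, hab.ne, hac.ne, hbc.ne⟩
    by_contra hlt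
    obtain rfl : n = 3 := by omega
    exact hC (nonempty_iso_cycleGraph_three hcard hab hac hbc)
  · exact ⟨a, b, hab, hbridge, hM⟩

end CycleComparison

section EdgeCount

open Finset

variable {V : Type*} {G : SimpleGraph V} {A B : Finset V} {u v w : V}

open Classical in
/-- The edges of the subgraph of `G` induced by `A`, as unordered pairs of vertices of `A`. -/
noncomputable def edgesIn (G : SimpleGraph V) (A : Finset V) : Finset (Sym2 V) :=
  {e ∈ A.sym2 | e ∈ G.edgeSet}

lemma mk_mem_edgesIn : s(u, v) ∈ edgesIn G A ↔ u ∈ A ∧ v ∈ A ∧ G.Adj u v := by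
  simp [edgesIn, and_assoc]

lemma edgesIn_eq_empty_iff : edgesIn G A = ∅ ↔ ∀ u ∈ A, ∀ v ∈ A, ¬ G.Adj u v := by
  simp only [eq_empty_iff_forall_notMem, Sym2.forall, mk_mem_edgesIn]
  grind

lemma card_edgesIn_erase_add [DecidableEq V] (hw : w ∈ A) :
    #(edgesIn G (A.erase w)) + #(neighborsIn G w (A.erase w)) = #(edgesIn G A) := by
  have hunion : edgesIn G A =
      edgesIn G (A.erase w) ∪ (neighborsIn G w (A.erase w)).image (s(w, ·)) := by
    ext e
    induction e with | _ p q
    simp only [mem_union, mk_mem_edgesIn, mem_image, mem_neighborsIn, mem_erase, Sym2.eq_iff]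
    grind [SimpleGraph.adj_comm, SimpleGraph.irrefl]
  have hdisj : Disjoint (edgesIn G (A.erase w))
      ((neighborsIn G w (A.erase w)).image (s(w, ·))) := by
    refine Finset.disjoint_left.2 fun e he hew => ?_
    obtain ⟨u, -, rfl⟩ := mem_image.1 hew
    exact notMem_erase w A (mk_mem_edgesIn.1 he).1
  rw [hunion, card_union_of_disjoint hdisj,
    card_image_of_injective _ fun _ _ => Sym2.congr_right.1]

lemma card_edgesIn_le_choose : #(edgesIn G A) ≤ (#A).choose 2 := by
  classical
  induction A using Finset.induction_on with
  | empty => simp [edgesIn]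
  | insert w A hw ih =>
    have hadd := card_edgesIn_erase_add (G := G) (mem_insert_self w A)
    rw [erase_insert hw] at hadd
    have hle := card_le_card (neighborsIn_subset (G := G) (v := w) (A := A))
    rw [card_insert_of_notMem hw, Nat.choose_succ_succ' _ 1, Nat.choose_one_right,
      one_add_one_eq_two]
    omega

lemma edgesIn_erase_of_neighborsIn_eq_singleton [DecidableEq V]
    (hu : neighborsIn G w (A.erase w) = {u}) :
    edgesIn G (A.erase u) = edgesIn G ((A.erase w).erase u) := by
  have hleaf : ∀ v ∈ A, G.Adj w v → v = u := fun v hv hwv =>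
    mem_singleton.1 (hu ▸ mem_neighborsIn.2 ⟨mem_erase.2 ⟨hwv.ne', hv⟩, hwv⟩)
  ext e
  induction e with | _ p q
  simp only [mk_mem_edgesIn, mem_erase]
  grind [SimpleGraph.adj_comm]

lemma card_edgesIn_univ [Fintype V] : #(edgesIn G univ) = G.edgeSet.ncard := by
  rw [← Set.ncard_coe_finset]
  congr 1
  ext e
  simp [edgesIn]

namespace ConnectedOn

lemma card_neighborsIn_erase_pos [DecidableEq V] (hB : ConnectedOn G B) (hcard : 2 ≤ #B)
    (hw : w ∈ B) : 0 < #(neighborsIn G w (B.erase w)) := by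
  obtain ⟨u, hu, v, hv, hvw, huv⟩ := hB.exists_boundary_edge (singleton_subset_iff.2 hw)
    (singleton_nonempty w) (by rintro rfl; simp at hcard)
  rw [mem_singleton] at hu hvw
  exact card_pos.2 ⟨v, mem_neighborsIn.2 ⟨mem_erase.2 ⟨hvw, hv⟩, hu ▸ huv⟩⟩

lemma card_le_card_edgesIn_add_one (hB : ConnectedOn G B) : #B ≤ #(edgesIn G B) + 1 := by
  classical
  induction hn : #B generalizing B with
  | zero => omega
  | succ n ih =>
    rcases Nat.lt_or_ge #B 2 with hlt | hcard
    · omega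
    obtain ⟨w, hw, hconn⟩ := hB.exists_erase hcard
    have hle := ih hconn (by rw [card_erase_of_mem hw, hn, Nat.add_sub_cancel])
    have hpos := hB.card_neighborsIn_erase_pos hcard hw
    have hadd := card_edgesIn_erase_add (G := G) hw
    omega

end ConnectedOn

end EdgeCount

section ProductBounds

open Finset

variable {V : Type*} {G : SimpleGraph V} {A C : Finset V} {a b u z : V} {x : ℝ}

lemma indepEval_pair [DecidableEq V] (hab : G.Adj a b) : indepEval G {a, b} x = 1 + 2 * x := by
  have hnonneighbors : nonneighborsIn G a {b} = ∅ := by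
    grind [mem_nonneighborsIn]
  rw [indepEval_insert (notMem_singleton.2 hab.ne), hnonneighbors, indepEval_singleton,
    indepEval_empty]
  ring

lemma indepEval_eq_mul_pow [DecidableEq V] (hCA : C ⊆ A)
    (h : ∀ z ∈ A \ C, ∀ u ∈ A, ¬ G.Adj z u) :
    indepEval G A x = indepEval G C x * (1 + x) ^ #(A \ C) := by
  induction hn : #(A \ C) generalizing A with
  | zero => rw [hCA.antisymm (sdiff_eq_empty_iff_subset.1 (card_eq_zero.1 hn)), pow_zero, mul_one]
  | succ n ih =>
    obtain ⟨z, hz⟩ := card_pos.1 (n.succ_pos.trans_eq hn.symm)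
    obtain ⟨hzA, hzC⟩ := mem_sdiff.1 hz
    have hsdiff : A.erase z \ C = (A \ C).erase z := erase_sdiff_comm A C z
    have hcard : #(A.erase z \ C) = n := by
      rw [hsdiff, card_erase_of_mem hz, hn, Nat.add_sub_cancel]
    rw [indepEval_erase hzA,
      nonneighborsIn_eq_self fun u hu => h z hz u (mem_of_mem_erase hu),
      ih (subset_erase.2 ⟨hCA, hzC⟩) (fun y hy u hu => h y (mem_of_mem_erase (hsdiff ▸ hy)) u
        (mem_of_mem_erase hu)) hcard]
    ring

namespace HereditarilyPos

lemma one_add_pos (h : HereditarilyPos G x A) (hz : z ∈ A) : 0 < 1 + x :=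
  indepEval_singleton (G := G) (v := z) ▸ h {z} (singleton_subset_iff.2 hz)

lemma indepEval_le_erase_mul [DecidableEq V] (h : HereditarilyPos G x A) (hx : x < 0)
    (hz : z ∈ A) : indepEval G A x ≤ indepEval G (A.erase z) x * (1 + x) := by
  have hle := (h.mono (erase_subset z A)).indepEval_le hx (nonneighborsIn_subset (G := G) (v := z))
  rw [indepEval_erase hz]
  linarith [mul_le_mul_of_nonpos_left hle hx.le]

lemma indepEval_lt_erase_mul [DecidableEq V] (h : HereditarilyPos G x A) (hx : x < 0)
    (hz : z ∈ A) (hu : u ∈ A) (hzu : G.Adj z u) :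
    indepEval G A x < indepEval G (A.erase z) x * (1 + x) := by
  have hss : nonneighborsIn G z (A.erase z) ⊂ A.erase z :=
    nonneighborsIn_subset.ssubset_of_mem_notMem (mem_erase.2 ⟨hzu.ne', hu⟩)
      fun hmem => (mem_nonneighborsIn.1 hmem).2 hzu
  have hlt := (h.mono (erase_subset z A)).indepEval_lt hx hss
  rw [indepEval_erase hz]
  linarith [mul_lt_mul_of_neg_left hlt hx]

lemma indepEval_le_mul_pow [DecidableEq V] (h : HereditarilyPos G x A) (hx : x < 0)
    (hCA : C ⊆ A) : indepEval G A x ≤ indepEval G C x * (1 + x) ^ #(A \ C) := by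
  induction hn : #(A \ C) generalizing A with
  | zero => rw [hCA.antisymm (sdiff_eq_empty_iff_subset.1 (card_eq_zero.1 hn)), pow_zero, mul_one]
  | succ n ih =>
    obtain ⟨z, hz⟩ := card_pos.1 (n.succ_pos.trans_eq hn.symm)
    obtain ⟨hzA, hzC⟩ := mem_sdiff.1 hz
    have hcard : #(A.erase z \ C) = n := by
      rw [erase_sdiff_comm, card_erase_of_mem hz, hn, Nat.add_sub_cancel]
    calc indepEval G A x ≤ indepEval G (A.erase z) x * (1 + x) := h.indepEval_le_erase_mul hx hzA
      _ ≤ indepEval G C x * (1 + x) ^ n * (1 + x) := mul_le_mul_of_nonneg_right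
        (ih (h.mono (erase_subset z A)) (subset_erase.2 ⟨hCA, hzC⟩) hcard) (h.one_add_pos hzA).le
      _ = indepEval G C x * (1 + x) ^ (n + 1) := by rw [mul_assoc, pow_succ]

lemma indepEval_lt_mul_pow [DecidableEq V] (h : HereditarilyPos G x A) (hx : x < 0)
    (hCA : C ⊆ A) (hz : z ∈ A \ C) (hu : u ∈ A) (hzu : G.Adj z u) :
    indepEval G A x < indepEval G C x * (1 + x) ^ #(A \ C) := by
  obtain ⟨hzA, hzC⟩ := mem_sdiff.1 hz
  have hcard : #(A.erase z \ C) + 1 = #(A \ C) := by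
    rw [erase_sdiff_comm, card_erase_add_one hz]
  calc indepEval G A x < indepEval G (A.erase z) x * (1 + x) :=
        h.indepEval_lt_erase_mul hx hzA hu hzu
    _ ≤ indepEval G C x * (1 + x) ^ #(A.erase z \ C) * (1 + x) := mul_le_mul_of_nonneg_right
      ((h.mono (erase_subset z A)).indepEval_le_mul_pow hx (subset_erase.2 ⟨hCA, hzC⟩))
      (h.one_add_pos hzA).le
    _ = indepEval G C x * (1 + x) ^ #(A \ C) := by rw [mul_assoc, ← pow_succ, hcard]

lemma indepEval_le_pow (h : HereditarilyPos G x A) (hx : x < 0) :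
    indepEval G A x ≤ (1 + x) ^ #A := by
  classical
  simpa using h.indepEval_le_mul_pow hx (empty_subset A)

lemma edgesIn_eq_empty_of_eq (h : HereditarilyPos G x A) (hx : x < 0)
    (heq : indepEval G A x = (1 + x) ^ #A) : edgesIn G A = ∅ := by
  classical
  refine edgesIn_eq_empty_iff.2 fun u hu v hv huv => ?_
  have hlt := h.indepEval_lt_mul_pow hx (empty_subset A) (by simpa using hu) hv huv
  rw [indepEval_empty, one_mul, sdiff_empty] at hlt
  exact hlt.ne heq

variable {k : ℕ}

lemma indepEval_le_of_adj (h : HereditarilyPos G x A) (hx : x < 0) (hk : #A = k + 2)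
    (ha : a ∈ A) (hb : b ∈ A) (hab : G.Adj a b) :
    indepEval G A x ≤ (1 + 2 * x) * (1 + x) ^ k := by
  classical
  have hsub : {a, b} ⊆ A := insert_subset ha (singleton_subset_iff.2 hb)
  have hle := h.indepEval_le_mul_pow hx hsub
  rwa [indepEval_pair hab, card_sdiff_of_subset hsub, card_pair hab.ne, hk, Nat.add_sub_cancel]
    at hle

lemma edgesIn_eq_singleton_of_eq (h : HereditarilyPos G x A) (hx : x < 0) (hk : #A = k + 2)
    (ha : a ∈ A) (hb : b ∈ A) (hab : G.Adj a b)
    (heq : indepEval G A x = (1 + 2 * x) * (1 + x) ^ k) : edgesIn G A = {s(a, b)} := by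
  classical
  have hsub : {a, b} ⊆ A := insert_subset ha (singleton_subset_iff.2 hb)
  have hends : ∀ z ∈ A, ∀ u ∈ A, G.Adj z u → z = a ∨ z = b := by
    intro z hz u hu hzu
    by_contra hne
    have hlt := h.indepEval_lt_mul_pow hx hsub (by simpa [hz] using hne) hu hzu
    rw [indepEval_pair hab, card_sdiff_of_subset hsub, card_pair hab.ne, hk,
      Nat.add_sub_cancel] at hlt
    exact hlt.ne heq
  ext e
  induction e with | _ p q
  rw [mk_mem_edgesIn, mem_singleton, Sym2.eq_iff]
  grind [SimpleGraph.adj_comm, SimpleGraph.irrefl]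

end HereditarilyPos

end ProductBounds

section TreesAndUnicyclicGraphs

open Finset

variable {V : Type*} {G : SimpleGraph V} {B : Finset V} {c u w : V} {x : ℝ} {m : ℕ}

/-- The subgraph of `G` induced by `A` is a tree: connected, with one edge fewer than vertices. -/
structure TreeOn (G : SimpleGraph V) (A : Finset V) : Prop where
  connectedOn : ConnectedOn G A
  card_eq : #A = #(edgesIn G A) + 1

/-- The subgraph of `G` induced by `A` is unicyclic: connected, with as many edges as vertices. -/
structure UnicyclicOn (G : SimpleGraph V) (A : Finset V) : Prop where
  connectedOn : ConnectedOn G A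
  card_eq : #A = #(edgesIn G A)

lemma star_pos_of_succ (hx : x ≤ 0) (hx1 : -1 ≤ x) (hpos : 0 < x + (1 + x) ^ (m + 1)) :
    0 < x + (1 + x) ^ m := by
  linarith [pow_le_pow_of_le_one (by linarith) (by linarith) (m.le_add_right 1) (a := 1 + x)]

lemma star_pos_of_le {y : ℝ} (hx1 : -1 ≤ x) (hxy : x ≤ y) (hpos : 0 < x + (1 + x) ^ m) :
    0 < y + (1 + y) ^ m := by
  linarith [pow_le_pow_left₀ (by linarith) (by linarith) m (a := 1 + x) (b := 1 + y)]

lemma indepEval_erase_leaf [DecidableEq V] (hw : w ∈ B)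
    (hu : neighborsIn G w (B.erase w) = {u}) :
    indepEval G B x = indepEval G (B.erase w) x + x * indepEval G ((B.erase w).erase u) x := by
  rw [indepEval_erase hw, nonneighborsIn_eq_sdiff, hu, sdiff_singleton_eq_erase]

lemma mem_erase_of_neighborsIn_eq_singleton [DecidableEq V]
    (hu : neighborsIn G w (B.erase w) = {u}) : u ∈ B.erase w :=
  neighborsIn_subset (hu ▸ mem_singleton_self u)

namespace TreeOn

lemma exists_leaf [DecidableEq V] (hB : TreeOn G B) (hm : #B = m + 2) :
    ∃ w ∈ B, ∃ u, neighborsIn G w (B.erase w) = {u} ∧ TreeOn G (B.erase w) ∧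
      #(B.erase w) = m + 1 := by
  obtain ⟨w, hw, hconn⟩ := hB.connectedOn.exists_erase (by omega)
  have hcard := card_erase_add_one hw
  have hle := hconn.card_le_card_edgesIn_add_one
  have hpos := hB.connectedOn.card_neighborsIn_erase_pos (by omega) hw
  have hadd := card_edgesIn_erase_add (G := G) hw
  have hB' := hB.card_eq
  obtain ⟨u, hu⟩ := card_eq_one.1 (show #(neighborsIn G w (B.erase w)) = 1 by omega)
  exact ⟨w, hw, u, hu, ⟨hconn, by omega⟩, by omega⟩

-- `x + (1 + x) ^ m` is the independence polynomial of the star with `m` leaves.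
lemma star_le_indepEval (hB : TreeOn G B) (hm : #B = m + 1) (hx : x < 0) (hx1 : -1 ≤ x)
    (hpos : 0 < x + (1 + x) ^ m) : x + (1 + x) ^ m ≤ indepEval G B x := by
  classical
  induction m generalizing B x with
  | zero =>
    obtain ⟨c, rfl⟩ := card_eq_one.1 hm
    rw [indepEval_singleton, pow_zero, add_comm]
  | succ m ih =>
    obtain ⟨w, hw, u, hu, htree, hcard⟩ := hB.exists_leaf hm
    have hpos' := star_pos_of_succ hx.le hx1 hpos
    have hherpos : HereditarilyPos G x (B.erase w) := .of_le hx.le fun y hy =>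
      have hy1 := hx1.trans hy.1
      have hypos := star_pos_of_le hx1 hy.1 hpos'
      ⟨hypos, ih htree hcard hy.2 hy1 hypos⟩
    have hcard' := card_erase_of_mem (mem_erase_of_neighborsIn_eq_singleton hu)
    have hle := (hherpos.mono (erase_subset u _)).indepEval_le_pow hx
    rw [hcard', hcard, Nat.add_sub_cancel] at hle
    rw [indepEval_erase_leaf hw hu, pow_succ]
    linarith [ih htree hcard hx hx1 hpos', mul_le_mul_of_nonpos_left hle hx.le]

lemma hereditarilyPos (hB : TreeOn G B) (hm : #B = m + 1) (hx : x < 0) (hx1 : -1 ≤ x)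
    (hpos : 0 < x + (1 + x) ^ m) : HereditarilyPos G x B :=
  .of_le hx.le fun _ hy =>
    have hypos := star_pos_of_le hx1 hy.1 hpos
    ⟨hypos, hB.star_le_indepEval hm hy.2 (hx1.trans hy.1) hypos⟩

lemma exists_edgesIn_erase_eq_empty [DecidableEq V] (hB : TreeOn G B) (hm : #B = m + 1)
    (hx : x < 0) (hx1 : -1 ≤ x) (hpos : 0 < x + (1 + x) ^ m)
    (heq : indepEval G B x = x + (1 + x) ^ m) : ∃ c ∈ B, edgesIn G (B.erase c) = ∅ := by
  cases m with
  | zero =>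
    obtain ⟨c, rfl⟩ := card_eq_one.1 hm
    exact ⟨c, mem_singleton_self c, by simp [edgesIn]⟩
  | succ m =>
    obtain ⟨w, hw, u, hu, htree, hcard⟩ := hB.exists_leaf hm
    have hpos' := star_pos_of_succ hx.le hx1 hpos
    have hu' := mem_erase_of_neighborsIn_eq_singleton hu
    have hcard' : #((B.erase w).erase u) = m := by
      rw [card_erase_of_mem hu', hcard, Nat.add_sub_cancel]
    have hherpos := (htree.hereditarilyPos hcard hx hx1 hpos').mono (erase_subset u _)
    have hle := hherpos.indepEval_le_pow hx
    rw [hcard'] at hle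
    rw [indepEval_erase_leaf hw hu, pow_succ] at heq
    have hge := htree.star_le_indepEval hcard hx hx1 hpos'
    refine ⟨u, mem_of_mem_erase hu', ?_⟩
    rw [edgesIn_erase_of_neighborsIn_eq_singleton hu]
    refine hherpos.edgesIn_eq_empty_of_eq hx ?_
    rw [hcard']
    exact hle.antisymm ((mul_le_mul_left_of_neg hx).1 (by linarith))

end TreeOn

lemma unicyclic_pos_of_succ (hx : x ≤ 0) (hx2 : -1 / 2 ≤ x)
    (hpos : 0 < x + (1 + 2 * x) * (1 + x) ^ (m + 1)) : 0 < x + (1 + 2 * x) * (1 + x) ^ m := by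
  have hpow := pow_le_pow_of_le_one (by linarith) (by linarith) (m.le_add_right 1) (a := 1 + x)
  linarith [mul_le_mul_of_nonneg_left hpow (show 0 ≤ 1 + 2 * x by linarith)]

lemma unicyclic_pos_of_le {y : ℝ} (hx2 : -1 / 2 ≤ x) (hxy : x ≤ y)
    (hpos : 0 < x + (1 + 2 * x) * (1 + x) ^ m) : 0 < y + (1 + 2 * y) * (1 + y) ^ m := by
  have hpow := pow_le_pow_left₀ (by linarith) (by linarith) m (a := 1 + x) (b := 1 + y)
  have hmul := mul_le_mul (show 1 + 2 * x ≤ 1 + 2 * y by linarith) hpow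
    (pow_nonneg (by linarith) m) (by linarith)
  linarith

lemma star_pos_of_unicyclic_pos (hx : x ≤ 0) (hx1 : -1 ≤ x)
    (hpos : 0 < x + (1 + 2 * x) * (1 + x) ^ m) : 0 < x + (1 + x) ^ (m + 1) := by
  rw [pow_succ]
  linarith [mul_nonpos_of_nonpos_of_nonneg hx (pow_nonneg (show 0 ≤ 1 + x by linarith) m)]

lemma card_nonneighborsIn_of_card_neighborsIn_eq_two [DecidableEq V] (hw : w ∈ B)
    (hdeg : #(neighborsIn G w (B.erase w)) = 2) (hm : #B = m + 3) :
    #(B.erase w) = m + 1 + 1 ∧ #(nonneighborsIn G w (B.erase w)) = m := by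
  have hcard := card_erase_add_one hw
  have hadd := card_nonneighborsIn_add (G := G) (v := w) (A := B.erase w)
  omega

namespace TreeOn

lemma ugraph_le_indepEval_of_erase [DecidableEq V] (h : TreeOn G (B.erase w)) (hw : w ∈ B)
    (hdeg : #(neighborsIn G w (B.erase w)) = 2) (hm : #B = m + 3) (hx : x < 0) (hx1 : -1 ≤ x)
    (hpos : 0 < x + (1 + 2 * x) * (1 + x) ^ m) :
    x + (1 + 2 * x) * (1 + x) ^ m ≤ indepEval G B x := by
  obtain ⟨hcard, hcard'⟩ := card_nonneighborsIn_of_card_neighborsIn_eq_two hw hdeg hm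
  have hpos' := star_pos_of_unicyclic_pos hx.le hx1 hpos
  have hle := ((h.hereditarilyPos hcard hx hx1 hpos').mono nonneighborsIn_subset).indepEval_le_pow
    (A := nonneighborsIn G w (B.erase w)) hx
  have hge := h.star_le_indepEval hcard hx hx1 hpos'
  rw [hcard'] at hle
  rw [pow_succ] at hge
  rw [indepEval_erase hw]
  linarith [mul_le_mul_of_nonpos_left hle hx.le]

lemma exists_center_of_eq_ugraph [DecidableEq V] (h : TreeOn G (B.erase w)) (hw : w ∈ B)
    (hdeg : #(neighborsIn G w (B.erase w)) = 2) (hm : #B = m + 3) (hx : x < 0) (hx1 : -1 ≤ x)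
    (hpos : 0 < x + (1 + 2 * x) * (1 + x) ^ m)
    (heq : indepEval G B x = x + (1 + 2 * x) * (1 + x) ^ m) :
    ∃ c ∈ B.erase w, edgesIn G ((B.erase w).erase c) = ∅ ∧
      edgesIn G (nonneighborsIn G w (B.erase w)) = ∅ := by
  obtain ⟨hcard, hcard'⟩ := card_nonneighborsIn_of_card_neighborsIn_eq_two hw hdeg hm
  have hpos' := star_pos_of_unicyclic_pos hx.le hx1 hpos
  have hherpos : HereditarilyPos G x (nonneighborsIn G w (B.erase w)) :=
    (h.hereditarilyPos hcard hx hx1 hpos').mono nonneighborsIn_subset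
  have hle := hherpos.indepEval_le_pow hx
  have hge := h.star_le_indepEval hcard hx hx1 hpos'
  rw [hcard'] at hle
  have hmul := mul_le_mul_of_nonpos_left hle hx.le
  rw [indepEval_erase hw] at heq
  obtain ⟨c, hc, hstar⟩ := h.exists_edgesIn_erase_eq_empty hcard hx hx1 hpos'
    (hge.antisymm' (by rw [pow_succ]; linarith))
  refine ⟨c, hc, hstar, hherpos.edgesIn_eq_empty_of_eq hx ?_⟩
  rw [pow_succ] at hge
  rw [hcard']
  exact hle.antisymm ((mul_le_mul_left_of_neg hx).1 (by linarith))

end TreeOn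

lemma card_edgesIn_erase_le_one_or_isPathWithChord [DecidableEq V] (hw : w ∈ B)
    (hconn : ConnectedOn G (B.erase w)) (hdeg : #(neighborsIn G w (B.erase w)) = 2)
    (hc : c ∈ B.erase w) (hstar : edgesIn G ((B.erase w).erase c) = ∅)
    (hnonneighbors : edgesIn G (nonneighborsIn G w (B.erase w)) = ∅) :
    #(edgesIn G (B.erase c)) ≤ 1 ∨ #B = 4 ∧ ∃ f, IsPathWithChord G f 4 0 3 := by
  have hcard := card_nonneighborsIn_add (G := G) (v := w) (A := B.erase w)
  have hcardB := card_erase_add_one hw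
  by_cases hwc : G.Adj w c
  · left
    have hadd := card_edgesIn_erase_add (G := G) (mem_erase.2 ⟨hwc.ne, hw⟩)
    have hneighbors :
        neighborsIn G w ((B.erase w).erase c) = (neighborsIn G w (B.erase w)).erase c := by
      grind [mem_neighborsIn]
    rw [erase_right_comm, hstar, hneighbors, card_erase_of_mem (mem_neighborsIn.2 ⟨hc, hwc⟩),
      hdeg, card_empty] at hadd
    omega
  · right
    rw [edgesIn_eq_empty_iff] at hstar hnonneighbors
    have hadj : ∀ z ∈ B.erase w, z ≠ c → G.Adj c z := by
      intro z hz hzc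
      obtain ⟨t, ht⟩ := card_pos.1 (hconn.card_neighborsIn_erase_pos
        (one_lt_card.2 ⟨z, hz, c, hc, hzc⟩) hz)
      rw [mem_neighborsIn] at ht
      grind [SimpleGraph.adj_comm]
    have hone : nonneighborsIn G w (B.erase w) = {c} := by
      refine eq_singleton_iff_unique_mem.2 ⟨mem_nonneighborsIn.2 ⟨hc, hwc⟩, fun z hz => ?_⟩
      grind [mem_nonneighborsIn]
    rw [hone, card_singleton] at hcard
    obtain ⟨p, q, hpq, hneighbors⟩ := card_eq_two.1 hdeg
    have hp : p ∈ B.erase w ∧ G.Adj w p := mem_neighborsIn.1 (by simp [hneighbors])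
    have hq : q ∈ B.erase w ∧ G.Adj w q := mem_neighborsIn.1 (by simp [hneighbors])
    have hcp := hadj p hp.1 (by rintro rfl; exact hwc hp.2)
    have hcq := hadj q hq.1 (by rintro rfl; exact hwc hq.2)
    have hnpq : ¬ G.Adj p q := hstar p (mem_erase.2 ⟨hcp.ne', hp.1⟩) q
      (mem_erase.2 ⟨hcq.ne', hq.1⟩)
    refine ⟨by omega, fun k => if k = 0 then w else if k = 1 then p else if k = 2 then c else q,
      fun k hk l hl => ?_⟩
    interval_cases k <;> interval_cases l <;>
      grind [SimpleGraph.adj_comm, SimpleGraph.irrefl, SimpleGraph.Adj.ne]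

namespace UnicyclicOn

lemma three_le_card (hB : UnicyclicOn G B) : 3 ≤ #B := by
  have hpos := card_pos.2 hB.connectedOn.nonempty
  have hle := hB.card_eq.trans_le card_edgesIn_le_choose
  by_contra! hlt
  interval_cases #B <;> simp at hle

lemma exists_adj_erase [DecidableEq V] (hB : UnicyclicOn G B) (hu : u ∈ B) :
    ∃ a ∈ B.erase u, ∃ b ∈ B.erase u, G.Adj a b := by
  by_contra! hnone
  have hadd := card_edgesIn_erase_add (G := G) hu
  rw [edgesIn_eq_empty_iff.2 hnone, card_empty, ← hB.card_eq] at hadd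
  have hle := card_le_card (neighborsIn_subset (G := G) (v := u) (A := B.erase u))
  have hcard := card_erase_add_one hu
  omega

lemma exists_erase [DecidableEq V] (hB : UnicyclicOn G B) : ∃ w ∈ B,
    (TreeOn G (B.erase w) ∧ #(neighborsIn G w (B.erase w)) = 2) ∨
      (UnicyclicOn G (B.erase w) ∧ ∃ u, neighborsIn G w (B.erase w) = {u}) := by
  have hthree := hB.three_le_card
  obtain ⟨w, hw, hconn⟩ := hB.connectedOn.exists_erase (by omega)
  have hcard := card_erase_add_one hw
  have hle := hconn.card_le_card_edgesIn_add_one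
  have hpos := hB.connectedOn.card_neighborsIn_erase_pos (by omega) hw
  have hadd := card_edgesIn_erase_add (G := G) hw
  have hB' := hB.card_eq
  obtain hdeg | hdeg : #(neighborsIn G w (B.erase w)) = 2 ∨ #(neighborsIn G w (B.erase w)) = 1 := by
    omega
  · exact ⟨w, hw, .inl ⟨⟨hconn, by omega⟩, hdeg⟩⟩
  · exact ⟨w, hw, .inr ⟨⟨hconn, by omega⟩, card_eq_one.1 hdeg⟩⟩

lemma exists_card_erase_eq [DecidableEq V] (h : UnicyclicOn G (B.erase w)) (hw : w ∈ B)
    (hm : #B = m + 3) : ∃ k, m = k + 1 ∧ #(B.erase w) = k + 3 := by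
  have hcard := card_erase_add_one hw
  have hthree := h.three_le_card
  exact ⟨m - 1, by omega, by omega⟩

-- `x + (1 + 2 * x) * (1 + x) ^ m` is the independence polynomial of `U_(m + 3)`.
lemma ugraph_le_indepEval (hB : UnicyclicOn G B) (hm : #B = m + 3) (hx : x < 0)
    (hx2 : -1 / 2 ≤ x) (hpos : 0 < x + (1 + 2 * x) * (1 + x) ^ m) :
    x + (1 + 2 * x) * (1 + x) ^ m ≤ indepEval G B x := by
  classical
  induction B using Finset.strongInduction generalizing m x with
  | H B ih =>
    obtain ⟨w, hw, ⟨htree, hdeg⟩ | ⟨hunicyclic, u, hu⟩⟩ := hB.exists_erase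
    · exact htree.ugraph_le_indepEval_of_erase hw hdeg hm hx (by linarith) hpos
    · obtain ⟨k, rfl, hcard⟩ := hunicyclic.exists_card_erase_eq hw hm
      have hpos' := unicyclic_pos_of_succ hx.le hx2 hpos
      have hherpos : HereditarilyPos G x (B.erase w) := .of_le hx.le fun y hy =>
        have hypos := unicyclic_pos_of_le hx2 hy.1 hpos'
        ⟨hypos, ih _ (erase_ssubset hw) hunicyclic hcard hy.2 (hx2.trans hy.1) hypos⟩
      have hu' := mem_erase_of_neighborsIn_eq_singleton hu
      obtain ⟨a, ha, b, hb, hab⟩ := hunicyclic.exists_adj_erase hu'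
      have hle := (hherpos.mono (erase_subset u _)).indepEval_le_of_adj hx
        (by rw [card_erase_of_mem hu', hcard]; rfl) ha hb hab (k := k)
      have hge := ih _ (erase_ssubset hw) hunicyclic hcard hx hx2 hpos'
      rw [indepEval_erase_leaf hw hu, pow_succ]
      linarith [mul_le_mul_of_nonpos_left hle hx.le]

lemma hereditarilyPos (hB : UnicyclicOn G B) (hm : #B = m + 3) (hx : x < 0) (hx2 : -1 / 2 ≤ x)
    (hpos : 0 < x + (1 + 2 * x) * (1 + x) ^ m) : HereditarilyPos G x B :=
  .of_le hx.le fun _ hy =>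
    have hypos := unicyclic_pos_of_le hx2 hy.1 hpos
    ⟨hypos, hB.ugraph_le_indepEval hm hy.2 (hx2.trans hy.1) hypos⟩

lemma eq_ugraph_cases [DecidableEq V] (hB : UnicyclicOn G B) (hm : #B = m + 3) (hx : x < 0)
    (hx2 : -1 / 2 ≤ x) (hpos : 0 < x + (1 + 2 * x) * (1 + x) ^ m)
    (heq : indepEval G B x = x + (1 + 2 * x) * (1 + x) ^ m) :
    (∃ c ∈ B, #(edgesIn G (B.erase c)) ≤ 1) ∨ #B = 4 ∧ ∃ f, IsPathWithChord G f 4 0 3 := by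
  obtain ⟨w, hw, ⟨htree, hdeg⟩ | ⟨hunicyclic, u, hu⟩⟩ := hB.exists_erase
  · obtain ⟨c, hc, hstar, hnonneighbors⟩ :=
      htree.exists_center_of_eq_ugraph hw hdeg hm hx (by linarith) hpos heq
    exact (card_edgesIn_erase_le_one_or_isPathWithChord hw htree.connectedOn hdeg hc hstar
      hnonneighbors).imp_left fun h => ⟨c, mem_of_mem_erase hc, h⟩
  · left
    obtain ⟨k, rfl, hcard⟩ := hunicyclic.exists_card_erase_eq hw hm
    have hpos' := unicyclic_pos_of_succ hx.le hx2 hpos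
    have hu' := mem_erase_of_neighborsIn_eq_singleton hu
    have hcard' : #((B.erase w).erase u) = k + 2 := by rw [card_erase_of_mem hu', hcard]; rfl
    obtain ⟨a, ha, b, hb, hab⟩ := hunicyclic.exists_adj_erase hu'
    have hherpos := (hunicyclic.hereditarilyPos hcard hx hx2 hpos').mono (erase_subset u _)
    have hle := hherpos.indepEval_le_of_adj hx hcard' ha hb hab
    have hge := hunicyclic.ugraph_le_indepEval hcard hx hx2 hpos'
    rw [indepEval_erase_leaf hw hu, pow_succ] at heq
    refine ⟨u, mem_of_mem_erase hu', ?_⟩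
    rw [edgesIn_erase_of_neighborsIn_eq_singleton hu,
      hherpos.edgesIn_eq_singleton_of_eq hx hcard' ha hb hab
        (hle.antisymm ((mul_le_mul_left_of_neg hx).1 (by linarith))), card_singleton]

end UnicyclicOn

end TreesAndUnicyclicGraphs

section MinimalUnicyclicGraph

open Finset

variable {V : Type*} {G : SimpleGraph V} {B : Finset V} {a b u : V} {x : ℝ} {m n : ℕ}

lemma UnicyclicOn.exists_adj_iff_of_card_edgesIn_erase_le_one [DecidableEq V]
    (hB : UnicyclicOn G B) (hu : u ∈ B) (hle : #(edgesIn G (B.erase u)) ≤ 1) :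
    ∃ a ∈ B.erase u, ∃ b ∈ B.erase u, a ≠ b ∧ ∀ p ∈ B, ∀ q ∈ B,
      (G.Adj p q ↔ p ≠ q ∧ (p = u ∨ q = u ∨ (p = a ∧ q = b) ∨ (p = b ∧ q = a))) := by
  have hadd := card_edgesIn_erase_add (G := G) hu
  have hcard := card_erase_add_one hu
  rw [← hB.card_eq] at hadd
  have hneighbors : neighborsIn G u (B.erase u) = B.erase u :=
    eq_of_subset_of_card_le neighborsIn_subset (by omega)
  have hadj : ∀ p ∈ B, p ≠ u → G.Adj u p := fun p hp hpu =>
    (mem_neighborsIn.1 (hneighbors.symm ▸ mem_erase.2 ⟨hpu, hp⟩)).2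
  obtain ⟨a, ha, b, hb, hab⟩ := hB.exists_adj_erase hu
  have hunique : ∀ p ∈ B.erase u, ∀ q ∈ B.erase u, G.Adj p q → s(p, q) = s(a, b) :=
    fun p hp q hq hpq => card_le_one.1 hle _ (mk_mem_edgesIn.2 ⟨hp, hq, hpq⟩) _
      (mk_mem_edgesIn.2 ⟨ha, hb, hab⟩)
  simp only [Sym2.eq_iff] at hunique
  refine ⟨a, ha, b, hb, hab.ne, fun p hp q hq => ⟨fun hpq => ⟨hpq.ne, ?_⟩, ?_⟩⟩
  · grind
  · grind [SimpleGraph.adj_comm]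

lemma zero_one_two_ne_in_fin :
    (0 : Fin (m + 3)) ≠ 1 ∧ (0 : Fin (m + 3)) ≠ 2 ∧ (1 : Fin (m + 3)) ≠ 2 := by
  simp only [ne_eq, Fin.ext_iff, Fin.val_zero, Fin.val_one, Fin.val_two]
  omega

lemma ugraph_adj_iff {i j : Fin (m + 3)} : (Ugraph (m + 3)).Adj i j ↔
    i ≠ j ∧ (i = 0 ∨ j = 0 ∨ (i = 1 ∧ j = 2) ∨ (i = 2 ∧ j = 1)) := by
  simp only [Ugraph, fromRel_adj, ne_eq, Fin.ext_iff, Fin.val_zero, Fin.val_one, Fin.val_two]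
  tauto

lemma indepEval_ugraph : indepEval (Ugraph (m + 3)) univ x = x + (1 + 2 * x) * (1 + x) ^ m := by
  obtain ⟨h01, h02, h12⟩ := zero_one_two_ne_in_fin (m := m)
  have hnonneighbors : nonneighborsIn (Ugraph (m + 3)) 0 (univ.erase 0) = ∅ := by
    ext i
    simp only [mem_nonneighborsIn, ugraph_adj_iff]
    grind
  have hsub : ({1, 2} : Finset (Fin (m + 3))) ⊆ univ.erase 0 := by grind
  have hcard : #(univ.erase 0 \ ({1, 2} : Finset (Fin (m + 3)))) = m := by
    rw [card_sdiff_of_subset hsub, card_pair h12, card_erase_of_mem (mem_univ _), card_fin]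
    rfl
  rw [indepEval_erase (mem_univ 0), hnonneighbors, indepEval_empty,
    indepEval_eq_mul_pow hsub fun z hz u hu => by rw [ugraph_adj_iff]; grind, hcard,
    indepEval_pair (ugraph_adj_iff.2 ⟨h12, by simp⟩)]
  ring

variable [Fintype V]

lemma Unicyclic.unicyclicOn_univ (hG : Unicyclic G) : UnicyclicOn G univ :=
  ⟨connectedOn_univ.2 hG.1, by rw [card_edgesIn_univ, hG.2, card_univ]⟩

lemma exists_equiv_fin (hcard : Fintype.card V = m + 3) (hau : a ≠ u) (hbu : b ≠ u)
    (hab : a ≠ b) : ∃ e : Fin (m + 3) ≃ V, e 0 = u ∧ e 1 = a ∧ e 2 = b := by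
  classical
  obtain ⟨h01, h02, h12⟩ := zero_one_two_ne_in_fin (m := m)
  let f : Fin (m + 3) → V := fun i => if i = 0 then u else if i = 1 then a else b
  have hf : Set.InjOn f ({0, 1, 2} : Finset (Fin (m + 3))) := by
    simp only [coe_insert, coe_singleton]
    intro i hi j hj hij
    grind
  obtain ⟨e, he⟩ := exists_equiv_extend_of_card_eq (t := univ) (by simp [hcard]) (subset_univ _) hf
  refine ⟨e.trans (Equiv.subtypeUnivEquiv mem_univ), ?_, ?_, ?_⟩
  · simpa [f] using he 0 (by simp)
  · simpa [f, h01.symm] using he 1 (by simp)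
  · simpa [f, h02.symm, h12.symm] using he 2 (by simp)

lemma nonempty_iso_ugraph (hcard : Fintype.card V = m + 3) (hau : a ≠ u) (hbu : b ≠ u)
    (hab : a ≠ b) (hadj : ∀ p q, G.Adj p q ↔
      p ≠ q ∧ (p = u ∨ q = u ∨ (p = a ∧ q = b) ∨ (p = b ∧ q = a))) :
    Nonempty (G ≃g Ugraph (m + 3)) := by
  obtain ⟨e, rfl, rfl, rfl⟩ := exists_equiv_fin hcard hau hbu hab
  refine nonempty_iso_of_injective hcard e.injective fun k l => ?_
  simp only [hadj, ugraph_adj_iff, e.injective.eq_iff, ne_eq]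

lemma Unicyclic.indepEval_ugraph_lt (hG : Unicyclic G) (hn : 3 ≤ n) (hcard : Fintype.card V = n)
    (hC : ¬ Nonempty (G ≃g cycleGraph n)) (hU : ¬ Nonempty (G ≃g Ugraph n)) (hx : x < 0)
    (hpos : ∀ y ∈ Set.Icc x 0, 0 < indepEval (Ugraph n) univ y) :
    indepEval (Ugraph n) univ x < indepEval G univ x := by
  classical
  obtain ⟨m, rfl⟩ := Nat.exists_eq_add_of_le' hn
  simp only [indepEval_ugraph] at hpos ⊢
  have hx2 : -1 / 2 ≤ x := by
    by_contra! hlt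
    have := hpos (-1 / 2) ⟨hlt.le, by norm_num⟩
    norm_num at this
  have hm : #(univ : Finset V) = m + 3 := by rw [card_univ, hcard]
  have hxpos := hpos x (Set.left_mem_Icc.2 hx.le)
  have hB := hG.unicyclicOn_univ
  refine (hB.ugraph_le_indepEval hm hx hx2 hxpos).lt_of_ne' fun heq => ?_
  obtain ⟨u, hu, hle⟩ | ⟨hfour, f, hf⟩ := hB.eq_ugraph_cases hm hx hx2 hxpos heq
  · obtain ⟨a, ha, b, hb, hab, hadj⟩ :=
      hB.exists_adj_iff_of_card_edgesIn_erase_le_one hu hle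
    exact hU (nonempty_iso_ugraph hcard (ne_of_mem_erase ha) (ne_of_mem_erase hb) hab
      fun p q => hadj p (mem_univ p) q (mem_univ q))
  · obtain rfl : m = 1 := by omega
    exact hC (hf.nonempty_iso_cycleGraph hn hcard)

end MinimalUnicyclicGraph

section Order

open Finset Topology

variable {V W : Type*} [Fintype V] [Fintype W] {G : SimpleGraph V} {H : SimpleGraph W} {x : ℝ}
  {n : ℕ}

lemma indepEval_univ_pos_of_nonneg (hx : 0 ≤ x) : 0 < indepEval G univ x := by
  classical
  exact sum_pos' (fun s _ => pow_nonneg hx #s)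
    ⟨∅, mem_filter.2 ⟨empty_mem_powerset univ, by simp [IsIndepFinset]⟩, by simp⟩

lemma indepEval_univ_pos_of_xi_lt (hx : xi G < x) : 0 < indepEval G univ x := by
  have hroots : ∀ t ∈ {t : ℝ | (indepPoly G).eval t = 0}, t ≤ 0 := fun t ht => by
    by_contra! hlt
    exact (indepEval_univ_pos_of_nonneg hlt.le).ne' (eval_indepPoly.symm.trans ht)
  have hle_xi : ∀ t, indepEval G univ t = 0 → t ≤ xi G := fun t ht =>
    le_csSup ⟨0, hroots⟩ (eval_indepPoly.trans ht)
  by_contra! hnonpos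
  obtain ⟨t, ht, ht0⟩ := intermediate_value_Icc (le_max_left x 0)
    continuous_indepEval.continuousOn
    ⟨hnonpos, (indepEval_univ_pos_of_nonneg (le_max_right x 0)).le⟩
  exact (hle_xi t ht0).not_gt (hx.trans_le ht.1)

-- The strict inequality need not hold at `xi G` itself, which is reached by continuity.
lemma sPre_of_indepEval_lt (h : ∀ x < 0, (∀ y ∈ Set.Icc x 0, 0 < indepEval G univ y) →
    indepEval G univ x < indepEval H univ x) : SPre H G := by
  refine ⟨fun x hx => ?_, fun heq => ?_⟩
  · rw [eval_indepPoly, eval_indepPoly]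
    rcases hx.2.eq_or_lt with rfl | hx0
    · rw [indepEval_zero, indepEval_zero]
    · have hxmem : x ∈ closure (Set.Ioo x 0) := closure_Ioo hx0.ne ▸ Set.left_mem_Icc.2 hx.2
      exact ContinuousWithinAt.closure_le hxmem continuous_indepEval.continuousWithinAt
        continuous_indepEval.continuousWithinAt fun t ht => (h t ht.2 fun y hy =>
          indepEval_univ_pos_of_xi_lt (hx.1.trans_lt (ht.1.trans_le hy.1))).le
  · have hpos : ∀ᶠ t in 𝓝 (0 : ℝ), 0 < indepEval G univ t :=
      continuous_indepEval.tendsto 0 |>.eventually_const_lt (indepEval_univ_pos_of_nonneg le_rfl)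
    obtain ⟨ε, hε, hball⟩ := Metric.eventually_nhds_iff.1 hpos
    have hlt := h (-(ε / 2)) (by linarith) fun y hy => hball (by
      rw [Real.dist_eq, sub_zero, abs_of_nonpos hy.2]; linarith [hy.1])
    rw [← eval_indepPoly, ← eval_indepPoly, heq] at hlt
    exact hlt.false

lemma Unicyclic.not_isAcyclic (hG : Unicyclic G) : ¬ G.IsAcyclic := by
  classical
  intro hacyclic
  have hcard := IsTree.card_edgeFinset (G := G) ⟨hG.1, hacyclic⟩
  rw [← hG.2, ← coe_edgeFinset, Set.ncard_coe_finset] at hcard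
  omega

theorem sPre_cycleGraph (hG : G.Connected) (hcyc : ¬ G.IsAcyclic) (hcard : Fintype.card V = n)
    (hC : ¬ Nonempty (G ≃g cycleGraph n)) (hD : 4 ≤ n → ¬ Nonempty (G ≃g Dgraph n)) :
    SPre (cycleGraph n) G :=
  sPre_of_indepEval_lt fun _ hx hpos =>
    indepEval_lt_cycleGraph hG hcyc hcard hC hD hx (.of_pos_Icc hx.le hpos)

theorem Unicyclic.sPre_ugraph (hG : Unicyclic G) (hn : 3 ≤ n) (hcard : Fintype.card V = n)
    (hC : ¬ Nonempty (G ≃g cycleGraph n)) (hU : ¬ Nonempty (G ≃g Ugraph n)) :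
    SPre G (Ugraph n) :=
  sPre_of_indepEval_lt fun _ hx hpos => hG.indepEval_ugraph_lt hn hcard hC hU hx hpos

end Order

/-- If `G` is connected unicyclic of order `n ≥ 3` and isomorphic to none of
`C_n`, `U_n` and (when `n ≥ 4`) `D_n`, then `C_n ≺ G` and `G ≺ U_n`. -/
theorem stmt1 {V : Type*} [Fintype V] (n : ℕ) (hn : 3 ≤ n) (G : SimpleGraph V)
    (hcard : Fintype.card V = n) (hG : Unicyclic G)
    (hC : ¬ Nonempty (G ≃g cycleGraph n))
    (hU : ¬ Nonempty (G ≃g Ugraph n))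
    (hD : 4 ≤ n → ¬ Nonempty (G ≃g Dgraph n)) :
    SPre (cycleGraph n) G ∧ SPre G (Ugraph n) :=
  ⟨sPre_cycleGraph hG.1 hG.not_isAcyclic hcard hC hD, hG.sPre_ugraph hn hcard hC hU⟩
end
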